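/- arXiv:2405.20480 — 2 statements merged into one kernel-verified Lean document; each statement's English description precedes it below -/
import Mathlib

section
/- Let G be a forest, d = Δ(G) + 1, and h a vertex of G of degree δ(h). Let I_h be the ideal of R_G(d) generated by the images of the variables y_{h1}, …, y_{hd}. Then R_G(d)/I_h ≅ R_{G∖{h}}(d), the ideal I_h is prime, and its height is d − δ(h). -/
open MvPolynomial

/-- The Lovász–Saks–Schrijver ideal `L_G(d)` of a simple graph `G`. -/
noncomputable def lssIdeal (K : Type) [Field K] {V : Type} (G : SimpleGraph V) (d : ℕ) :
    Ideal (MvPolynomial (V × Fin d) K) :=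
  Ideal.span {f | ∃ i j : V, G.Adj i j ∧
    f = ∑ k : Fin d, MvPolynomial.X (i, k) * MvPolynomial.X (j, k)}

/-- The ideal `I_h` of `R_G(d)` generated by the images of the variables
`y_{h1}, …, y_{hd}` attached to the vertex `h`. -/
noncomputable def vertexIdeal (K : Type) [Field K] {V : Type} (G : SimpleGraph V) (d : ℕ)
    (h : V) : Ideal (MvPolynomial (V × Fin d) K ⧸ lssIdeal K G d) :=
  Ideal.span (Set.range fun k : Fin d =>
    Ideal.Quotient.mk (lssIdeal K G d) (MvPolynomial.X (h, k)))

/-!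
If `h` is a leaf attached to `p`, then `f_{hp} = y_{pc} y_{hc} + b` is linear in the variable
`y_{hc}`, which occurs in no other generator. A linear polynomial `a X + b` over a ring `A`
generates a prime ideal modulo a prime `P` as soon as `a ∉ P`, `P + (a)` is prime and
`b ∉ P + (a)`: over the domain `A ⧸ P` it spans the kernel of the evaluation at `-b / a`. So
primality of `L_G(d)` follows by attaching leaves one at a time, at the price of proving it for
`L_G(d)` plus a set of variables, since `y_{pc}` has to be adjoined as well. To control this set,
colour the edges of `G` properly with `Δ(G)` of the `d` available indices and take for `c` the
colour of the edge `{h, p}`: the adjoined variables never meet those at the spare colour, and `b`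
stays nonzero because of its term `y_{hz} y_{pz}`, where `z` is the spare colour.

The same primality result shows that the variables `y_{hk}`, for the `d - δ(h) - 1` colours `k`
used by neither the edges at `h` nor the spare one, generate prime ideals one after another,
which with `I_h` on top gives the lower bound for the height. For the upper bound pick `δ(h)`
columns of the matrix whose rows are the vectors at the neighbours of `h`. By Cramer's rule their
minor `D ∉ I_h` carries `I_h` into the ideal generated by the other `d - δ(h)` variables at `h`,
so `I_h` is minimal over that ideal and Krull's height theorem applies.
-/

theorem exists_mul_X_add_dvd_pow_mul_sub_C {A : Type*} [CommRing A] (a b : A)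
    (q : Polynomial A) : ∃ (n : ℕ) (r : A),
      Polynomial.C a * Polynomial.X + Polynomial.C b ∣ Polynomial.C a ^ n * q - Polynomial.C r := by
  induction q using Polynomial.induction_on' with
  | add p q hp hq =>
    obtain ⟨m, r, hp⟩ := hp
    obtain ⟨n, s, hq⟩ := hq
    refine ⟨m + n, a ^ n * r + a ^ m * s, ?_⟩
    convert (hp.mul_left (Polynomial.C a ^ n)).add (hq.mul_left (Polynomial.C a ^ m)) using 1
    simp only [map_add, map_mul, map_pow]
    ring
  | monomial n c =>
    refine ⟨n, c * (-b) ^ n, ?_⟩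
    convert (sub_dvd_pow_sub_pow (Polynomial.C a * Polynomial.X) (-Polynomial.C b) n).mul_left
      (Polynomial.C c) using 1
    · ring
    · simp only [← Polynomial.C_mul_X_pow_eq_monomial, map_mul, map_pow, map_neg]
      ring

theorem prime_C_mul_X_add_C {A : Type*} [CommRing A] [IsDomain A] {a b : A} (ha : Prime a)
    (hab : ¬a ∣ b) : Prime (Polynomial.C a * Polynomial.X + Polynomial.C b) := by
  set f := Polynomial.C a * Polynomial.X + Polynomial.C b with hf
  have haf : ¬Polynomial.C a ∣ f := fun h ↦ hab <| by
    simpa [hf] using Polynomial.C_dvd_iff_dvd_coeff _ _ |>.1 h 0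
  have hf0 : f ≠ 0 := fun h ↦ haf (h ▸ dvd_zero _)
  let ρ : Polynomial A →+* FractionRing A := Polynomial.eval₂RingHom (algebraMap A _)
    (-algebraMap A _ b / algebraMap A _ a)
  have hρf : ρ f = 0 := by
    have : algebraMap A (FractionRing A) a ≠ 0 := by simpa using ha.ne_zero
    simp [ρ, hf, mul_div_cancel₀ _ this]
  have hker : RingHom.ker ρ = Ideal.span {f} := by
    refine le_antisymm (fun q hq ↦ ?_) ((Ideal.span_singleton_le_iff_mem _).2 hρf)
    obtain ⟨n, r, hr⟩ := exists_mul_X_add_dvd_pow_mul_sub_C a b q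
    have hr0 : r = 0 := by
      have hρr : ρ (Polynomial.C a ^ n * q - Polynomial.C r) = 0 :=
        zero_dvd_iff.1 (hρf ▸ map_dvd ρ hr)
      rw [map_sub, map_mul, RingHom.mem_ker.1 hq, mul_zero, zero_sub, neg_eq_zero] at hρr
      simpa [ρ] using hρr
    obtain ⟨g, hg⟩ : f ∣ Polynomial.C a ^ n * q := by simpa [hr0] using hr
    obtain ⟨g', rfl⟩ := (Polynomial.prime_C_iff.2 ha).pow_dvd_of_dvd_mul_left n haf
      (Dvd.intro _ hg)
    refine Ideal.mem_span_singleton.2 ⟨g', mul_left_cancel₀ (pow_ne_zero n ?_) (hg.trans ?_)⟩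
    · exact Polynomial.C_ne_zero.2 ha.ne_zero
    · ring
  rw [← Ideal.span_singleton_prime hf0, ← hker]
  exact RingHom.ker_isPrime ρ

theorem isPrime_map_C_sup_span_C_mul_X_add_C {A : Type*} [CommRing A] {P : Ideal A} [P.IsPrime]
    {a b : A} (haP : a ∉ P) (hPa : (P ⊔ Ideal.span {a}).IsPrime) (hb : b ∉ P ⊔ Ideal.span {a}) :
    (P.map Polynomial.C ⊔
      Ideal.span {Polynomial.C a * Polynomial.X + Polynomial.C b}).IsPrime := by
  let mk := Ideal.Quotient.mk P
  have hmap : (P ⊔ Ideal.span {a}).map mk = Ideal.span {mk a} := by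
    rw [Ideal.map_sup, Ideal.map_quotient_self, bot_sup_eq, Ideal.map_span, Set.image_singleton]
  have hcomap : (Ideal.span {mk a}).comap mk = P ⊔ Ideal.span {a} := by
    rw [← hmap, Ideal.comap_map_mk le_sup_left]
  have ha0 : mk a ≠ 0 := fun h ↦ haP (Ideal.Quotient.eq_zero_iff_mem.1 h)
  have ha : Prime (mk a) := by
    rw [← Ideal.span_singleton_prime ha0, ← hmap]
    exact Ideal.map_isPrime_of_surjective Ideal.Quotient.mk_surjective
      (Ideal.mk_ker.trans_le le_sup_left)
  have hab : ¬mk a ∣ mk b := by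
    rwa [← Ideal.mem_span_singleton, ← Ideal.mem_comap, hcomap]
  have hprime := (Ideal.span_singleton_prime (prime_C_mul_X_add_C ha hab).ne_zero).2
    (prime_C_mul_X_add_C ha hab)
  let φ := Polynomial.mapRingHom mk
  have hφ : Function.Surjective φ := Polynomial.map_surjective _ Ideal.Quotient.mk_surjective
  have hφf : φ (Polynomial.C a * Polynomial.X + Polynomial.C b) =
      Polynomial.C (mk a) * Polynomial.X + Polynomial.C (mk b) := by simp [φ]
  rw [← hφf, ← Set.image_singleton, ← Ideal.map_span] at hprime
  have := hprime.comap φ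
  rwa [Ideal.comap_map_of_surjective' φ hφ, Polynomial.ker_mapRingHom, Ideal.mk_ker,
    sup_comm] at this

theorem exists_algHom_polynomial_eval_X_eq (R : Type*) {σ : Type*} [CommRing R] (x : σ) :
    ∃ θ : MvPolynomial σ R →ₐ[R] Polynomial (MvPolynomial σ R), θ (X x) = Polynomial.X ∧
      Set.EqOn θ Polynomial.C (supported R {x}ᶜ) ∧ ∀ p, (θ p).eval (X x) = p := by
  classical
  let θ : MvPolynomial σ R →ₐ[R] Polynomial (MvPolynomial σ R) :=
    aeval (Function.update (fun i ↦ Polynomial.C (X i)) x Polynomial.X)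
  have hx : θ (X x) = Polynomial.X := by simp [θ]
  have hC {i : σ} (hi : i ≠ x) : θ (X i) = Polynomial.C (X i) := by
    simp [θ, Function.update_of_ne hi]
  refine ⟨θ, hx, ?_, fun p ↦ ?_⟩
  · have : Set.EqOn θ (Polynomial.CAlgHom (R := R)) (supported R {x}ᶜ) := by
      refine AlgHom.eqOn_adjoin_iff.2 ?_
      rintro _ ⟨i, hi, rfl⟩
      exact hC hi
    exact this
  · induction p using MvPolynomial.induction_on with
    | C r => simp [θ, Polynomial.algebraMap_apply]
    | add p q hp hq => rw [map_add, Polynomial.eval_add, hp, hq]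
    | mul_X p i hp =>
      rw [map_mul, Polynomial.eval_mul, hp]
      obtain rfl | hi := eq_or_ne i x
      · rw [hx, Polynomial.eval_X]
      · rw [hC hi, Polynomial.eval_C]

theorem isPrime_span_sup_span_mul_X_add {R σ : Type*} [CommRing R] {x : σ}
    {s : Set (MvPolynomial σ R)} (hs : s ⊆ supported R {x}ᶜ) {a b : MvPolynomial σ R}
    (ha : a ∈ supported R {x}ᶜ) (hb : b ∈ supported R {x}ᶜ) [(Ideal.span s).IsPrime]
    (has : a ∉ Ideal.span s) (hsa : (Ideal.span s ⊔ Ideal.span {a}).IsPrime)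
    (hab : b ∉ Ideal.span s ⊔ Ideal.span {a}) :
    (Ideal.span s ⊔ Ideal.span {a * X x + b}).IsPrime := by
  obtain ⟨θ, hθx, hθC, hθ⟩ := exists_algHom_polynomial_eval_X_eq R x
  set J := Ideal.span s ⊔ Ideal.span {a * X x + b} with hJ
  have hmap : J.map θ = (Ideal.span s).map Polynomial.C ⊔
      Ideal.span {Polynomial.C a * Polynomial.X + Polynomial.C b} := by
    have hθs : θ '' s = Polynomial.C '' s := (hθC.mono hs).image_eq
    have hθf : θ (a * X x + b) = Polynomial.C a * Polynomial.X + Polynomial.C b := by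
      rw [map_add, map_mul, hθC ha, hθC hb, hθx]
    rw [hJ, Ideal.map_sup, Ideal.map_span, Ideal.map_span, hθs, Set.image_singleton, hθf,
      Ideal.map_span]
  have hle : J.map θ ≤ J.comap (Polynomial.evalRingHom (X x)) :=
    Ideal.map_le_iff_le_comap.2 fun p hp ↦ by
      rwa [Ideal.mem_comap, Ideal.mem_comap, Polynomial.coe_evalRingHom, hθ]
  have hcomap : (J.map θ).comap θ = J := by
    refine le_antisymm (fun p hp ↦ ?_) Ideal.le_comap_map
    simpa [hθ] using hle (Ideal.mem_comap.1 hp)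
  rw [← hcomap, hmap]
  exact (isPrime_map_C_sup_span_C_mul_X_add_C has hsa hab).comap θ

theorem ker_killCompl {R σ τ : Type*} [CommRing R] {f : σ → τ} (hf : Function.Injective f) :
    RingHom.ker (killCompl (R := R) hf) = Ideal.span (X '' (Set.range f)ᶜ) := by
  ext p
  rw [mem_ideal_span_X_image, RingHom.mem_ker]
  constructor
  · intro hp m hm
    by_contra! hm'
    obtain ⟨n, rfl⟩ := (Finsupp.mem_range_mapDomain_iff f hf m).2 hm'
    rw [mem_support_iff, ← coeff_killCompl hf, hp] at hm
    exact hm (coeff_zero n)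
  · intro hp
    ext n
    rw [coeff_killCompl, coeff_zero, ← notMem_support_iff]
    intro hn
    obtain ⟨i, hi, hni⟩ := hp _ hn
    exact hni (Finsupp.mapDomain_of_notMem_range n i hi)

theorem isPrime_span_X_image (R : Type*) {σ : Type*} [CommRing R] [IsDomain R] (s : Set σ) :
    (Ideal.span (X '' s : Set (MvPolynomial σ R))).IsPrime := by
  have := RingHom.ker_isPrime (killCompl (R := R) (Subtype.val_injective (p := (· ∈ sᶜ))))
  rwa [ker_killCompl, Subtype.range_coe_subtype, Set.ofPred_mem_eq, compl_compl] at this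

theorem exists_adj_forall_adj_eq_of_isAcyclic {V : Type*} [Finite V] {G : SimpleGraph V}
    (hG : G.IsAcyclic) (hne : G ≠ ⊥) : ∃ h p, G.Adj h p ∧ ∀ w, G.Adj h w → w = p := by
  obtain ⟨a, b, hab⟩ := SimpleGraph.ne_bot_iff_exists_adj.1 hne
  have : Nonempty V := ⟨a⟩
  obtain ⟨u, v, p, hp, hmax⟩ :=
    SimpleGraph.Walk.exists_isPath_forall_isPath_length_le_length G
  have hnil : ¬p.Nil := by
    rw [← SimpleGraph.Walk.length_eq_zero_iff]
    exact (Nat.one_pos.trans_le (hmax _ _ _ (SimpleGraph.Path.singleton hab).2)).ne'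
  refine ⟨u, p.snd, p.adj_snd hnil, fun w huw ↦ hG.eq_snd_of_adj_start hp huw ?_⟩
  have : ¬(p.cons huw.symm).IsPath := by grind [SimpleGraph.Walk.length_cons]
  grind [hp.cons]

theorem forest_induction {V : Type*} [Finite V] {motive : SimpleGraph V → Prop} (bot : motive ⊥)
    (sup_edge : ∀ (G : SimpleGraph V) (h p : V), h ≠ p → (∀ w, ¬G.Adj h w) → motive G →
      motive (G ⊔ SimpleGraph.edge h p))
    (G : SimpleGraph V) (hG : G.IsAcyclic) : motive G := by
  induction hn : G.edgeSet.ncard generalizing G with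
  | zero =>
    obtain rfl : G = ⊥ := by
      rwa [Set.ncard_eq_zero, SimpleGraph.edgeSet_eq_empty] at hn
    exact bot
  | succ n ih =>
    have hne : G ≠ ⊥ := by
      rintro rfl
      simp at hn
    obtain ⟨h, p, hhp, hleaf⟩ := exists_adj_forall_adj_eq_of_isAcyclic hG hne
    let G' := G.deleteEdges {s(h, p)}
    have hG' : G'.edgeSet.ncard = n := by
      rw [SimpleGraph.edgeSet_deleteEdges, Set.ncard_sdiff_singleton_of_mem (G.mem_edgeSet.2 hhp),
        hn, Nat.add_sub_cancel]
    have hisol : ∀ w, ¬G'.Adj h w := by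
      intro w hhw
      obtain ⟨hhw, hw⟩ := SimpleGraph.deleteEdges_adj.1 hhw
      exact hw (by rw [hleaf w hhw, Set.mem_singleton_iff])
    have hsup : G' ⊔ SimpleGraph.edge h p = G :=
      sdiff_sup_cancel ((SimpleGraph.edge_le_iff G).2 (.inr hhp))
    rw [← hsup]
    exact sup_edge G' h p hhp.ne hisol (ih G' (hG.anti (G.deleteEdges_le _)) hG')

/-- A proper edge colouring of `G` which does not use the spare colour `z`. It is encoded as a total
function on unordered pairs, whose values outside the edge set of `G` are irrelevant. -/
structure IsEdgeColoringAvoiding {V C : Type*} (G : SimpleGraph V) (z : C) (κ : Sym2 V → C) :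
    Prop where
  ne_of_adj {u v : V} : G.Adj u v → κ s(u, v) ≠ z
  eq_of_eq {u v w : V} : G.Adj u v → G.Adj u w → κ s(u, v) = κ s(u, w) → v = w

namespace IsEdgeColoringAvoiding

variable {V C : Type*} {G H : SimpleGraph V} {z : C} {κ : Sym2 V → C}

theorem mono (hκ : IsEdgeColoringAvoiding H z κ) (hGH : G ≤ H) :
    IsEdgeColoringAvoiding G z κ where
  ne_of_adj huv := hκ.ne_of_adj (hGH huv)
  eq_of_eq huv huw := hκ.eq_of_eq (hGH huv) (hGH huw)

theorem update_sup_edge [DecidableEq V] (hκ : IsEdgeColoringAvoiding G z κ) {h p : V} {c : C}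
    (hh : ∀ w, ¬G.Adj h w) (hcz : c ≠ z) (hc : ∀ w, G.Adj p w → κ s(p, w) ≠ c) :
    IsEdgeColoringAvoiding (G ⊔ SimpleGraph.edge h p) z (Function.update κ s(h, p) c) where
  ne_of_adj {u v} huv := by
    have := hκ.ne_of_adj (u := u) (v := v)
    grind [Function.update_apply]
  eq_of_eq {u v w} huv huw huvw := by
    have := hκ.eq_of_eq (u := u) (v := v) (w := w)
    grind [Function.update_apply, Sym2.eq_swap]

theorem exists_sup_edge [Finite V] (hκ : IsEdgeColoringAvoiding G z κ) {h p : V}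
    (hhp : h ≠ p) (hh : ∀ w, ¬G.Adj h w)
    (hdeg : ((G ⊔ SimpleGraph.edge h p).neighborSet p).ncard < Nat.card C) :
    ∃ κ' : Sym2 V → C, IsEdgeColoringAvoiding (G ⊔ SimpleGraph.edge h p) z κ' := by
  classical
  let used := insert z ((fun w ↦ κ s(p, w)) '' G.neighborSet p)
  have hnbr : (G.neighborSet p).ncard + 1 ≤
      ((G ⊔ SimpleGraph.edge h p).neighborSet p).ncard := by
    rw [← Set.ncard_insert_of_notMem (a := h) (s := G.neighborSet p) fun hp ↦ hh p hp.symm]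
    refine Set.ncard_le_ncard (Set.insert_subset ?_ fun w hw ↦ Or.inl hw)
    simp [SimpleGraph.edge_adj, hhp.symm]
  have hused : used.ncard < Nat.card C :=
    calc used.ncard ≤ ((fun w ↦ κ s(p, w)) '' G.neighborSet p).ncard + 1 :=
          Set.ncard_insert_le _ _
      _ ≤ (G.neighborSet p).ncard + 1 := Nat.add_le_add_right Set.ncard_image_le _
      _ ≤ _ := hnbr
      _ < Nat.card C := hdeg
  obtain ⟨c, hc⟩ : ∃ c, c ∉ used := by
    by_contra! hall
    rw [Set.eq_univ_of_forall hall, Set.ncard_univ] at hused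
    exact hused.false
  exact ⟨_, hκ.update_sup_edge hh (fun hcz ↦ hc (Or.inl hcz))
    fun w hw hcw ↦ hc (Or.inr ⟨w, hw, hcw⟩)⟩

theorem exists_of_isAcyclic [Finite V] (hG : G.IsAcyclic) (z : C)
    (hdeg : ∀ v, (G.neighborSet v).ncard < Nat.card C) :
    ∃ κ : Sym2 V → C, IsEdgeColoringAvoiding G z κ := by
  refine forest_induction
    (motive := fun G ↦ (∀ v, (G.neighborSet v).ncard < Nat.card C) →
      ∃ κ : Sym2 V → C, IsEdgeColoringAvoiding G z κ) ?bot ?sup_edge G hG hdeg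
  case bot => exact fun _ ↦ ⟨fun _ ↦ z, by simp, by simp⟩
  case sup_edge =>
    intro G h p hhp hh ih hdeg
    obtain ⟨κ, hκ⟩ := ih fun v ↦
      (Set.ncard_le_ncard fun w hw ↦ Or.inl hw).trans_lt (hdeg v)
    exact hκ.exists_sup_edge hhp hh (hdeg p)

end IsEdgeColoringAvoiding

/-- The quadric `f_{ij} = ∑ₖ y_{ik} y_{jk}` expressing that the vectors at the vertices `i` and `j`
are orthogonal; `L_G(d)` is generated by the `f_{ij}` with `{i, j}` an edge. -/
noncomputable def edgeForm (R : Type*) [CommSemiring R] {V : Type*} (d : ℕ) (i j : V) :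
    MvPolynomial (V × Fin d) R :=
  ∑ k, X (i, k) * X (j, k)

/-- The ideal generated by `L_G(d)` and the variables indexed by `T`. For `T = {h} × [d]` it is the
preimage of `I_h` in the polynomial ring. -/
noncomputable def lssVarIdeal (K : Type) [Field K] {V : Type} (G : SimpleGraph V) (d : ℕ)
    (T : Set (V × Fin d)) : Ideal (MvPolynomial (V × Fin d) K) :=
  lssIdeal K G d ⊔ Ideal.span (X '' T)

section Generators

variable (K : Type) [Field K] {V : Type} (G : SimpleGraph V) {d : ℕ}

theorem edgeForm_comm (i j : V) : edgeForm K d i j = edgeForm K d j i := by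
  simp only [edgeForm, mul_comm]

theorem lssIdeal_eq_span :
    lssIdeal K G d = Ideal.span {f | ∃ i j, G.Adj i j ∧ f = edgeForm K d i j} := rfl

variable {G} in
theorem edgeForm_mem_lssIdeal {i j : V} (hij : G.Adj i j) : edgeForm K d i j ∈ lssIdeal K G d :=
  Ideal.subset_span ⟨i, j, hij, rfl⟩

theorem lssIdeal_bot : lssIdeal K (⊥ : SimpleGraph V) d = ⊥ := by
  simp [lssIdeal]

theorem lssIdeal_sup (H : SimpleGraph V) :
    lssIdeal K (G ⊔ H) d = lssIdeal K G d ⊔ lssIdeal K H d := by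
  simp only [lssIdeal_eq_span, ← Ideal.span_union]
  congr 1
  ext f
  simp only [SimpleGraph.sup_adj, Set.mem_ofPred_eq, Set.mem_union]
  grind

theorem lssIdeal_edge {h p : V} (hhp : h ≠ p) :
    lssIdeal K (SimpleGraph.edge h p) d = Ideal.span {edgeForm K d h p} := by
  refine congrArg Ideal.span (Set.Subset.antisymm ?_ ?_)
  · rintro _ ⟨i, j, hij, rfl⟩
    obtain ⟨⟨rfl, rfl⟩ | ⟨rfl, rfl⟩, -⟩ := SimpleGraph.edge_adj _ _ _ _ |>.1 hij
    · rfl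
    · exact edgeForm_comm K _ _
  · rintro _ rfl
    exact ⟨h, p, by simp [SimpleGraph.edge_adj, hhp], rfl⟩

theorem lssVarIdeal_eq_span (T : Set (V × Fin d)) :
    lssVarIdeal K G d T =
      Ideal.span ({f | ∃ i j, G.Adj i j ∧ f = edgeForm K d i j} ∪ X '' T) :=
  (Ideal.span_union _ _).symm

variable {G} in
theorem lssVarIdeal_generators_subset_supported {h : V} (hh : ∀ w, ¬G.Adj h w) {c : Fin d}
    {T : Set (V × Fin d)} (hhc : (h, c) ∉ T) :
    {f | ∃ i j, G.Adj i j ∧ f = edgeForm K d i j} ∪ X '' T ⊆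
      (supported K {(h, c)}ᶜ : Set (MvPolynomial (V × Fin d) K)) := by
  rintro _ (⟨i, j, hij, rfl⟩ | ⟨t, ht, rfl⟩)
  · have hi : i ≠ h := fun e ↦ hh j (e ▸ hij)
    have hj : j ≠ h := fun e ↦ hh i (e ▸ hij.symm)
    exact sum_mem fun k _ ↦
      mul_mem (X_mem_supported.2 (by simp [hi])) (X_mem_supported.2 (by simp [hj]))
  · exact X_mem_supported.2 fun e ↦ hhc (e ▸ ht)

theorem lssVarIdeal_sup_edge {h p : V} (hhp : h ≠ p) (T : Set (V × Fin d)) :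
    lssVarIdeal K (G ⊔ SimpleGraph.edge h p) d T =
      lssVarIdeal K G d T ⊔ Ideal.span {edgeForm K d h p} := by
  rw [lssVarIdeal, lssIdeal_sup, lssIdeal_edge K hhp, sup_right_comm, lssVarIdeal]

theorem lssVarIdeal_insert (t : V × Fin d) (T : Set (V × Fin d)) :
    lssVarIdeal K G d (insert t T) = lssVarIdeal K G d T ⊔ Ideal.span {X t} := by
  rw [lssVarIdeal, lssVarIdeal, Set.image_insert_eq, Ideal.span_insert, sup_assoc,
    sup_comm (Ideal.span {X t})]

variable {G} in
theorem lssVarIdeal_le_ker_eval_indicator {A T : Set (V × Fin d)}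
    (hA : ∀ {i j} (k), G.Adj i j → (i, k) ∈ A → (j, k) ∉ A) (hAT : Disjoint A T) :
    lssVarIdeal K G d T ≤ RingHom.ker (eval (A.indicator (1 : V × Fin d → K))) := by
  refine sup_le (Ideal.span_le.2 ?_) (Ideal.span_le.2 ?_)
  · rintro _ ⟨i, j, hij, rfl⟩
    simp only [SetLike.mem_coe, RingHom.mem_ker, map_sum, map_mul, eval_X]
    refine Finset.sum_eq_zero fun k _ ↦ ?_
    by_cases hi : (i, k) ∈ A
    · rw [Set.indicator_of_notMem (hA k hij hi), mul_zero]
    · rw [Set.indicator_of_notMem hi, zero_mul]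
  · rintro _ ⟨t, ht, rfl⟩
    simpa using hAT.notMem_of_mem_right ht

variable {K G} in
theorem X_mem_lssVarIdeal_iff {T : Set (V × Fin d)} {t : V × Fin d} :
    X t ∈ lssVarIdeal K G d T ↔ t ∈ T := by
  refine ⟨fun ht ↦ ?_, fun ht ↦ Ideal.mem_sup_right (Ideal.subset_span ⟨t, ht, rfl⟩)⟩
  by_contra htT
  have := lssVarIdeal_le_ker_eval_indicator K (A := {t})
    (fun k hij hi hj ↦ hij.ne (congrArg Prod.fst (hi.trans hj.symm)))
    (Set.disjoint_singleton_left.2 htT) ht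
  simp at this

variable {G} in
theorem edgeForm_notMem_lssVarIdeal {i j : V} (hij : ¬G.Adj i j) {k : Fin d}
    {T : Set (V × Fin d)} (hi : (i, k) ∉ T) (hj : (j, k) ∉ T) :
    edgeForm K d i j ∉ lssVarIdeal K G d T := by
  intro hmem
  have := lssVarIdeal_le_ker_eval_indicator K (A := {(i, k), (j, k)}) (G := G) (T := T) ?_ ?_ hmem
  · rw [RingHom.mem_ker, edgeForm, map_sum, Finset.sum_eq_single k] at this
    · simp at this
    · intro l _ hl
      simp [hl]
    · simp
  · rintro u v l huv (hu | hu) (hv | hv) <;> cases hu <;> cases hv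
    exacts [huv.ne rfl, hij huv, hij huv.symm, huv.ne rfl]
  · simp [hi, hj]

end Generators

section Prime

variable {K : Type} [Field K] {V : Type} {G : SimpleGraph V} {d : ℕ}

theorem isPrime_lssVarIdeal_sup_edge {h p : V} (hhp : h ≠ p) (hh : ∀ w, ¬G.Adj h w)
    {T : Set (V × Fin d)} {c z : Fin d} (hcz : c ≠ z) (hhc : (h, c) ∉ T) (hpc : (p, c) ∉ T)
    (hhz : (h, z) ∉ T) (hpz : (p, z) ∉ T) (hT : (lssVarIdeal K G d T).IsPrime)
    (hT' : (lssVarIdeal K G d (insert (p, c) T)).IsPrime) :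
    (lssVarIdeal K (G ⊔ SimpleGraph.edge h p) d T).IsPrime := by
  -- `f_{hp} = a y_{hc} + b` is linear in `y_{hc}`, which occurs in no other generator.
  let a : MvPolynomial (V × Fin d) K := X (p, c)
  let b : MvPolynomial (V × Fin d) K := ∑ k ∈ Finset.univ.erase c, X (h, k) * X (p, k)
  have hform : edgeForm K d h p = a * X (h, c) + b := by
    rw [edgeForm, ← Finset.add_sum_erase _ _ (Finset.mem_univ c), mul_comm]
  have ha : a ∈ supported K {(h, c)}ᶜ := X_mem_supported.2 (by simp [hhp.symm])
  have hb : b ∈ supported K {(h, c)}ᶜ := sum_mem fun k hk ↦ mul_mem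
    (X_mem_supported.2 (by simpa using Finset.ne_of_mem_erase hk))
    (X_mem_supported.2 (by simp [hhp.symm]))
  have haT : a ∉ lssVarIdeal K G d T := X_mem_lssVarIdeal_iff.not.2 hpc
  have hbT : b ∉ lssVarIdeal K G d (insert (p, c) T) := by
    intro hb
    have hab : a * X (h, c) + b ∈ lssVarIdeal K G d (insert (p, c) T) :=
      add_mem (Ideal.mul_mem_right _ _ (X_mem_lssVarIdeal_iff.2 (Set.mem_insert _ _))) hb
    rw [← hform] at hab
    exact edgeForm_notMem_lssVarIdeal K (k := z) (hh p) (by simp [hhz, hhp])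
      (by simp [hpz, hcz.symm]) hab
  rw [lssVarIdeal_insert] at hT' hbT
  rw [lssVarIdeal_sup_edge K G hhp, hform]
  rw [lssVarIdeal_eq_span] at hT hT' haT hbT ⊢
  exact isPrime_span_sup_span_mul_X_add (lssVarIdeal_generators_subset_supported K hh hhc) ha hb
    haT hT' hbT

theorem isPrime_lssVarIdeal [Finite V] (hG : G.IsAcyclic) {z : Fin d} {κ : Sym2 V → Fin d}
    (hκ : IsEdgeColoringAvoiding G z κ) {T : Set (V × Fin d)}
    (hT : ∀ v w, G.Adj v w → (v, z) ∉ T ∧ (v, κ s(v, w)) ∉ T) :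
    (lssVarIdeal K G d T).IsPrime := by
  refine forest_induction
    (motive := fun G ↦ IsEdgeColoringAvoiding G z κ → ∀ T : Set (V × Fin d),
      (∀ v w, G.Adj v w → (v, z) ∉ T ∧ (v, κ s(v, w)) ∉ T) → (lssVarIdeal K G d T).IsPrime)
    ?bot ?sup_edge G hG hκ T hT
  case bot =>
    intro _ T _
    rw [lssVarIdeal, lssIdeal_bot, bot_sup_eq]
    exact isPrime_span_X_image K T
  case sup_edge =>
    intro G h p hhp hh ih hκ T hT
    have hle : G ≤ G ⊔ SimpleGraph.edge h p := le_sup_left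
    have hadj : (G ⊔ SimpleGraph.edge h p).Adj h p := Or.inr (by simp [SimpleGraph.edge_adj, hhp])
    obtain ⟨hhz, hhc⟩ := hT h p hadj
    obtain ⟨hpz, hpc⟩ := hT p h hadj.symm
    rw [Sym2.eq_swap] at hpc
    have hcz : κ s(h, p) ≠ z := hκ.ne_of_adj hadj
    refine isPrime_lssVarIdeal_sup_edge hhp hh hcz hhc hpc hhz hpz
      (ih (hκ.mono hle) T fun v w hvw ↦ hT v w (hle hvw)) (ih (hκ.mono hle) _ fun v w hvw ↦ ?_)
    obtain ⟨hvz, hvc⟩ := hT v w (hle hvw)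
    refine ⟨fun hv ↦ hv.elim (fun e ↦ hcz (congrArg Prod.snd e).symm) hvz,
      fun hv ↦ hv.elim (fun e ↦ ?_) hvc⟩
    obtain ⟨rfl, hc⟩ := Prod.mk.inj e
    obtain rfl := hκ.eq_of_eq (hle hvw) hadj.symm (by rw [hc, Sym2.eq_swap])
    exact hh _ hvw.symm

end Prime

theorem isPrime_lssIdeal (K : Type) [Field K] {V : Type} [Finite V] {G : SimpleGraph V} {d : ℕ}
    (hG : G.IsAcyclic) (hdeg : ∀ v, (G.neighborSet v).ncard < d) : (lssIdeal K G d).IsPrime := by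
  cases isEmpty_or_nonempty V with
  | inl _ =>
    rw [Subsingleton.elim G ⊥, lssIdeal_bot]
    exact Ideal.isPrime_bot
  | inr hV =>
    have hd : 0 < d := (Nat.zero_le _).trans_lt (hdeg hV.some)
    obtain ⟨κ, hκ⟩ := IsEdgeColoringAvoiding.exists_of_isAcyclic hG (⟨0, hd⟩ : Fin d)
      (by simpa using hdeg)
    simpa [lssVarIdeal] using isPrime_lssVarIdeal (K := K) hG hκ (T := ∅) (by simp)

section Quotient

variable (K : Type) [Field K] {V W : Type} (G : SimpleGraph V) (d : ℕ) {f : W → V}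
  (hf : Function.Injective f)

/-- The map `K[y_{vk} : v ∈ V] → K[y_{wk} : w ∈ W]` killing the variables of the vertices outside
the image of the embedding `f : W → V`. -/
noncomputable def killVertexCompl :
    MvPolynomial (V × Fin d) K →ₐ[K] MvPolynomial (W × Fin d) K :=
  killCompl (hf.prodMap Function.injective_id)

theorem killVertexCompl_surjective : Function.Surjective (killVertexCompl K d hf) := fun p ↦
  ⟨rename (Prod.map f id) p, killCompl_rename_app _ p⟩

theorem ker_killVertexCompl :
    RingHom.ker (killVertexCompl K d hf) = Ideal.span (X '' {t | t.1 ∉ Set.range f}) := by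
  rw [killVertexCompl, ker_killCompl]
  congr 2
  ext ⟨v, k⟩
  simp

theorem killVertexCompl_X (w : W) (k : Fin d) :
    killVertexCompl K d hf (X (f w, k)) = X (w, k) := by
  have := killCompl_rename_app (R := K) (hf.prodMap (Function.injective_id (α := Fin d))) (X (w, k))
  rwa [rename_X] at this

theorem killVertexCompl_X_of_notMem {v : V} (hv : v ∉ Set.range f) (k : Fin d) :
    killVertexCompl K d hf (X (v, k)) = 0 := by
  rw [← RingHom.mem_ker, ker_killVertexCompl]
  exact Ideal.subset_span ⟨(v, k), hv, rfl⟩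

theorem map_killVertexCompl_lssIdeal :
    (lssIdeal K G d).map (killVertexCompl K d hf) = lssIdeal K (G.comap f) d := by
  rw [lssIdeal_eq_span, Ideal.map_span]
  refine le_antisymm (Ideal.span_le.2 ?_) (Ideal.span_mono ?_)
  · rintro _ ⟨_, ⟨i, j, hij, rfl⟩, rfl⟩
    rw [edgeForm, map_sum]
    by_cases hi : i ∈ Set.range f
    · by_cases hj : j ∈ Set.range f
      · obtain ⟨v, rfl⟩ := hi
        obtain ⟨w, rfl⟩ := hj
        simp only [map_mul, killVertexCompl_X]
        exact edgeForm_mem_lssIdeal K (G := G.comap f) hij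
      · simp [killVertexCompl_X_of_notMem K d hf hj]
    · simp [killVertexCompl_X_of_notMem K d hf hi]
  · rintro _ ⟨v, w, hvw, rfl⟩
    refine ⟨_, ⟨f v, f w, hvw, rfl⟩, ?_⟩
    simp only [edgeForm, map_sum, map_mul, killVertexCompl_X]

theorem comap_killVertexCompl_lssIdeal :
    (lssIdeal K (G.comap f) d).comap (killVertexCompl K d hf) =
      lssVarIdeal K G d {t | t.1 ∉ Set.range f} := by
  rw [← map_killVertexCompl_lssIdeal K G d hf,
    Ideal.comap_map_of_surjective' _ (killVertexCompl_surjective K d hf), ker_killVertexCompl,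
    lssVarIdeal]

/-- Killing the variables of the vertices outside an embedded vertex set `W` turns `R_G(d)` into the
LSS ring of the subgraph induced on `W`. -/
noncomputable def quotientLssVarIdealEquiv :
    (MvPolynomial (V × Fin d) K ⧸ lssVarIdeal K G d {t | t.1 ∉ Set.range f}) ≃+*
      (MvPolynomial (W × Fin d) K ⧸ lssIdeal K (G.comap f) d) :=
  (Ideal.quotEquivOfEq <| by
    rw [← comap_killVertexCompl_lssIdeal K G d hf, ← RingHom.comap_ker, Ideal.mk_ker]
    rfl).trans <|
    RingHom.quotientKerEquivOfSurjective
      (f := (Ideal.Quotient.mk (lssIdeal K (G.comap f) d)).comp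
        (killVertexCompl K d hf : MvPolynomial (V × Fin d) K →+* MvPolynomial (W × Fin d) K))
      (Ideal.Quotient.mk_surjective.comp (killVertexCompl_surjective K d hf))

variable {K G d}

theorem vertexIdeal_eq_map (h : V) :
    vertexIdeal K G d h =
      (lssVarIdeal K G d ({h} ×ˢ Set.univ)).map (Ideal.Quotient.mk (lssIdeal K G d)) := by
  rw [vertexIdeal, lssVarIdeal, Ideal.map_sup, Ideal.map_quotient_self, bot_sup_eq, Ideal.map_span]
  congr 1
  ext f
  simp

/-- The isomorphism `R_G(d) ⧸ I_h ≃ R_{G∖{h}}(d)`. -/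
noncomputable def quotientVertexIdealEquiv (h : V) :
    ((MvPolynomial (V × Fin d) K ⧸ lssIdeal K G d) ⧸ vertexIdeal K G d h) ≃+*
      (MvPolynomial ({v : V | v ≠ h} × Fin d) K ⧸ lssIdeal K (G.induce {v : V | v ≠ h}) d) :=
  have hvars : ({h} ×ˢ Set.univ : Set (V × Fin d)) =
      {t | t.1 ∉ Set.range (Subtype.val : {v : V | v ≠ h} → V)} := by
    ext
    simp
  (Ideal.quotEquivOfEq (vertexIdeal_eq_map h)).trans <|
    (DoubleQuot.quotQuotEquivQuotOfLE le_sup_left).trans <|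
      (Ideal.quotEquivOfEq (congrArg (lssVarIdeal K G d) hvars)).trans <|
        quotientLssVarIdealEquiv K G d Subtype.val_injective

theorem isPrime_vertexIdeal [Finite V] (hG : G.IsAcyclic)
    (hdeg : ∀ v, (G.neighborSet v).ncard < d) (h : V) : (vertexIdeal K G d h).IsPrime := by
  have hdeg' (v : {v : V | v ≠ h}) :
      ((G.induce {v : V | v ≠ h}).neighborSet v).ncard < d :=
    (Set.ncard_le_ncard_of_injOn Subtype.val (fun _ hw ↦ hw)
      Subtype.val_injective.injOn).trans_lt (hdeg v)
  have := isPrime_lssIdeal K (hG.induce {v : V | v ≠ h}) hdeg'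
  exact (Ideal.Quotient.isDomain_iff_prime _).1
    ((quotientVertexIdealEquiv h).toMulEquiv.isDomain _)

end Quotient

section Height

variable {R : Type*} [CommRing R]

theorem card_le_height_of_strictMono {α : Type*} {q : Finset α → Ideal R} (hq : StrictMono q)
    {U : Finset α} (hprime : ∀ T ⊆ U, (q T).IsPrime) :
    (U.card : ℕ∞) ≤ (q U).height := by
  classical
  induction U using Finset.induction_on with
  | empty => simp
  | insert k U hk ih =>
    have := hprime U (Finset.subset_insert k U)
    have := hprime _ subset_rfl
    rw [Finset.card_insert_of_notMem hk, Nat.cast_add_one]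
    calc (U.card : ℕ∞) + 1 ≤ (q U).height + 1 := by
          gcongr
          exact ih fun T hT ↦ hprime T (hT.trans (Finset.subset_insert k U))
      _ ≤ (q (insert k U)).height :=
          Ideal.height_add_one_le_of_lt_of_isPrime (hq (Finset.ssubset_insert hk))

theorem det_mul_mem_of_forall_mulVec_mem {n : Type*} [Fintype n] [DecidableEq n] {J : Ideal R}
    {M : Matrix n n R} {x : n → R} (hJ : ∀ i, (M.mulVec x) i ∈ J) (j : n) : M.det * x j ∈ J := by
  have hadj : M.det * x j = M.adjugate.mulVec (M.mulVec x) j := by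
    rw [Matrix.mulVec_mulVec, Matrix.adjugate_mul, Matrix.smul_mulVec, Matrix.one_mulVec,
      Pi.smul_apply, smul_eq_mul]
  rw [hadj]
  exact sum_mem fun i _ ↦ Ideal.mul_mem_left _ _ (hJ i)

theorem span_mem_minimalPrimes_of_forall_mul_mem {s : Set R} {J : Ideal R} {D : R}
    (hs : (Ideal.span s).IsPrime) (hJ : J ≤ Ideal.span s) (hD : D ∉ Ideal.span s)
    (hDs : ∀ x ∈ s, D * x ∈ J) : Ideal.span s ∈ J.minimalPrimes := by
  refine ⟨⟨hs, hJ⟩, fun Q ⟨hQ, hJQ⟩ hQs ↦ Ideal.span_le.2 fun x hx ↦ ?_⟩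
  exact (hQ.mem_or_mem (hJQ (hDs x hx))).resolve_left fun hDQ ↦ hD (hQs hDQ)

theorem height_le_ncard_of_mem_minimalPrimes_span [IsNoetherianRing R] {I : Ideal R} {s : Set R}
    (hs : s.Finite) (hI : I ∈ (Ideal.span s).minimalPrimes) : I.height ≤ s.ncard := by
  lift s to Finset R using hs
  rw [Set.ncard_coe_finset]
  exact Ideal.height_le_card_of_mem_minimalPrimes_span_finset hI

end Height

section VertexIdealHeight

variable {K : Type} [Field K] {V : Type} {G : SimpleGraph V} {d : ℕ}

theorem map_mk_lssVarIdeal (T : Set (V × Fin d)) :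
    (lssVarIdeal K G d T).map (Ideal.Quotient.mk (lssIdeal K G d)) =
      Ideal.span ((fun t ↦ Ideal.Quotient.mk (lssIdeal K G d) (X t)) '' T) := by
  rw [lssVarIdeal, Ideal.map_sup, Ideal.map_quotient_self, bot_sup_eq, Ideal.map_span,
    Set.image_image]

theorem map_mk_lssVarIdeal_strictMono :
    StrictMono fun T : Set (V × Fin d) ↦
      (lssVarIdeal K G d T).map (Ideal.Quotient.mk (lssIdeal K G d)) := by
  refine Monotone.strictMono_of_injective (fun T T' hTT' ↦ ?_) fun T T' hTT' ↦ ?_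
  · exact Ideal.map_mono (sup_le_sup_left (Ideal.span_mono (Set.image_mono hTT')) _)
  · have hcomap := congrArg (Ideal.comap (Ideal.Quotient.mk (lssIdeal K G d))) hTT'
    simp only [Ideal.comap_map_mk (show lssIdeal K G d ≤ lssVarIdeal K G d _ from le_sup_left)]
      at hcomap
    ext t
    rw [← X_mem_lssVarIdeal_iff (K := K) (G := G), hcomap, X_mem_lssVarIdeal_iff]

theorem isPrime_lssVarIdeal_singleton_prod [Finite V] (hG : G.IsAcyclic) {z : Fin d}
    {κ : Sym2 V → Fin d} (hκ : IsEdgeColoringAvoiding G z κ) {h : V} {S : Set (Fin d)}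
    (hz : z ∉ S) (hS : ∀ w, G.Adj h w → κ s(h, w) ∉ S) :
    (lssVarIdeal K G d ({h} ×ˢ S)).IsPrime := by
  refine isPrime_lssVarIdeal hG hκ fun v w hvw ↦ ⟨fun hv ↦ hz hv.2, ?_⟩
  rintro ⟨rfl, hv⟩
  exact hS w hvw hv

theorem le_height_vertexIdeal [Finite V] (hG : G.IsAcyclic)
    (hdeg : ∀ v, (G.neighborSet v).ncard < d) (h : V) :
    ((d - (G.neighborSet h).ncard : ℕ) : ℕ∞) ≤ (vertexIdeal K G d h).height := by
  classical
  let z : Fin d := ⟨0, (Nat.zero_le _).trans_lt (hdeg h)⟩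
  obtain ⟨κ, hκ⟩ := IsEdgeColoringAvoiding.exists_of_isAcyclic hG z (by simpa using hdeg)
  let used : Finset (Fin d) := insert z ((G.neighborSet h).toFinite.toFinset.image (κ s(h, ·)))
  have hused : used.card ≤ (G.neighborSet h).ncard + 1 := by
    rw [Set.ncard_eq_toFinset_card _ (G.neighborSet h).toFinite]
    exact (Finset.card_insert_le _ _).trans (Nat.add_le_add_right Finset.card_image_le 1)
  let q : Finset (Fin d) → Ideal (MvPolynomial (V × Fin d) K ⧸ lssIdeal K G d) := fun T ↦
    (lssVarIdeal K G d ({h} ×ˢ (T : Set (Fin d)))).map (Ideal.Quotient.mk (lssIdeal K G d))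
  have hq : StrictMono q := map_mk_lssVarIdeal_strictMono.comp fun T T' hTT' ↦ by
    simpa only [Set.singleton_prod] using
      (Prod.mk_right_injective h).image_strictMono (Finset.coe_ssubset.2 hTT')
  have hprime : ∀ T ⊆ usedᶜ, (q T).IsPrime := by
    intro T hT
    have : (lssVarIdeal K G d ({h} ×ˢ (T : Set (Fin d)))).IsPrime := by
      refine isPrime_lssVarIdeal_singleton_prod hG hκ (fun hz ↦ ?_) fun w hhw hw ↦ ?_
      · exact Finset.mem_compl.1 (hT hz) (Finset.mem_insert_self _ _)
      · exact Finset.mem_compl.1 (hT hw)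
          (Finset.mem_insert_of_mem (Finset.mem_image_of_mem _ (by simpa using hhw)))
    exact Ideal.isPrime_map_quotientMk_of_isPrime le_sup_left
  have hlt : q usedᶜ < vertexIdeal K G d h := by
    rw [vertexIdeal_eq_map, ← Finset.coe_univ]
    exact hq <| Finset.ssubset_univ_iff.2 fun huniv ↦
      Finset.mem_compl.1 (huniv ▸ Finset.mem_univ z) (Finset.mem_insert_self _ _)
  have := hprime usedᶜ subset_rfl
  have := isPrime_vertexIdeal (K := K) hG hdeg h
  calc ((d - (G.neighborSet h).ncard : ℕ) : ℕ∞) ≤ (usedᶜ.card : ℕ∞) + 1 := by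
        rw [Finset.card_compl, Fintype.card_fin]
        norm_cast
        omega
    _ ≤ (q usedᶜ).height + 1 := by
        gcongr
        exact card_le_height_of_strictMono hq hprime
    _ ≤ (vertexIdeal K G d h).height := Ideal.height_add_one_le_of_lt_of_isPrime hlt

theorem det_notMem_lssVarIdeal {h : V} [Fintype (G.neighborSet h)] [DecidableEq (G.neighborSet h)]
    {c : G.neighborSet h → Fin d} (hc : Function.Injective c) :
    (Matrix.of fun i j : G.neighborSet h ↦ (X (↑i, c j) : MvPolynomial (V × Fin d) K)).det ∉
      lssVarIdeal K G d ({h} ×ˢ Set.univ) := by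
  let A : Set (V × Fin d) := Set.range fun j : G.neighborSet h ↦ (↑j, c j)
  have hA : ∀ {i j} (k), G.Adj i j → (i, k) ∈ A → (j, k) ∉ A := by
    rintro _ _ k hij ⟨i, hi⟩ ⟨j, hj⟩
    obtain ⟨rfl, rfl⟩ := Prod.mk.inj hi
    obtain ⟨rfl, hji⟩ := Prod.mk.inj hj
    exact hij.ne (congrArg Subtype.val (hc hji)).symm
  have hAh : Disjoint A ({h} ×ˢ Set.univ) := by
    refine Set.disjoint_left.2 ?_
    rintro _ ⟨j, rfl⟩ ⟨hj, -⟩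
    exact G.ne_of_adj j.2 hj.symm
  intro hmem
  have hdet := lssVarIdeal_le_ker_eval_indicator K hA hAh hmem
  rw [RingHom.mem_ker, RingHom.map_det] at hdet
  have hone : (eval (A.indicator (1 : V × Fin d → K))).mapMatrix
      (Matrix.of fun i j : G.neighborSet h ↦ (X (↑i, c j) : MvPolynomial (V × Fin d) K)) = 1 := by
    ext i j
    rw [RingHom.mapMatrix_apply, Matrix.map_apply, Matrix.of_apply, eval_X]
    obtain rfl | hij := eq_or_ne i j
    · rw [Matrix.one_apply_eq, Set.indicator_of_mem (Set.mem_range_self i),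
        Pi.one_apply]
    · rw [Matrix.one_apply_ne hij, Set.indicator_of_notMem]
      rintro ⟨j', hj'⟩
      obtain ⟨hi, hj⟩ := Prod.mk.inj hj'
      exact hij ((Subtype.ext hi).symm.trans (hc hj))
  rw [hone, Matrix.det_one] at hdet
  exact one_ne_zero hdet

theorem det_mul_X_mem_lssVarIdeal {h : V} [Fintype (G.neighborSet h)]
    [DecidableEq (G.neighborSet h)] {c : G.neighborSet h → Fin d} (hc : Function.Injective c)
    (k : Fin d) :
    (Matrix.of fun i j : G.neighborSet h ↦ (X (↑i, c j) : MvPolynomial (V × Fin d) K)).det *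
      X (h, k) ∈ lssVarIdeal K G d ({h} ×ˢ (Set.range c)ᶜ) := by
  by_cases hk : k ∈ Set.range c
  · obtain ⟨j, rfl⟩ := hk
    refine det_mul_mem_of_forall_mulVec_mem (x := fun j ↦ X (h, c j)) (fun i ↦ ?_) j
    have hform : edgeForm K d (↑i) h ∈ lssVarIdeal K G d ({h} ×ˢ (Set.range c)ᶜ) :=
      Ideal.mem_sup_left (edgeForm_mem_lssIdeal K i.2.symm)
    rw [edgeForm, ← Finset.sum_add_sum_compl (Finset.univ.map ⟨c, hc⟩), Finset.sum_map] at hform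
    refine (Ideal.add_mem_iff_left _ (sum_mem fun l hl ↦ Ideal.mul_mem_left _ _ ?_)).1 hform
    exact X_mem_lssVarIdeal_iff.2 ⟨rfl, by simpa using hl⟩
  · exact Ideal.mul_mem_left _ _ (X_mem_lssVarIdeal_iff.2 ⟨rfl, hk⟩)

theorem height_vertexIdeal_le [Finite V] {h : V} (hdeg : (G.neighborSet h).ncard ≤ d)
    (hI : (vertexIdeal K G d h).IsPrime) :
    (vertexIdeal K G d h).height ≤ ((d - (G.neighborSet h).ncard : ℕ) : ℕ∞) := by
  classical
  have := Fintype.ofFinite (G.neighborSet h)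
  obtain ⟨c⟩ : Nonempty (G.neighborSet h ↪ Fin d) := by
    refine Function.Embedding.nonempty_of_card_le ?_
    rwa [Fintype.card_fin, ← Nat.card_eq_fintype_card, Nat.card_coe_set_eq]
  let mk := Ideal.Quotient.mk (lssIdeal K G d)
  let D : MvPolynomial (V × Fin d) K :=
    (Matrix.of fun i j : G.neighborSet h ↦ X (↑i, c j)).det
  let T : Set (V × Fin d) := {h} ×ˢ (Set.range c)ᶜ
  have hT : T.ncard = d - (G.neighborSet h).ncard := by
    rw [Set.ncard_prod, Set.ncard_singleton, one_mul, Set.ncard_compl, Nat.card_fin,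
      ← Set.image_univ, Set.ncard_image_of_injective _ c.injective, Set.ncard_univ,
      Nat.card_coe_set_eq]
  have hD : mk D ∉ vertexIdeal K G d h := by
    rw [vertexIdeal_eq_map, ← Ideal.mem_comap, Ideal.comap_map_mk le_sup_left]
    exact det_notMem_lssVarIdeal c.injective
  have hmin : vertexIdeal K G d h ∈ ((lssVarIdeal K G d T).map mk).minimalPrimes := by
    refine span_mem_minimalPrimes_of_forall_mul_mem hI ?_ hD ?_
    · exact (map_mk_lssVarIdeal_strictMono.monotone
        (Set.prod_mono_right (Set.subset_univ _))).trans_eq (vertexIdeal_eq_map h).symm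
    · rintro _ ⟨k, rfl⟩
      rw [← map_mul]
      exact Ideal.mem_map_of_mem mk (det_mul_X_mem_lssVarIdeal c.injective k)
  rw [map_mk_lssVarIdeal] at hmin
  calc (vertexIdeal K G d h).height
      ≤ ((fun t ↦ Ideal.Quotient.mk (lssIdeal K G d) (X t)) '' T).ncard :=
        height_le_ncard_of_mem_minimalPrimes_span (Set.toFinite _) hmin
    _ ≤ T.ncard := mod_cast Set.ncard_image_le
    _ = _ := by rw [hT]

end VertexIdealHeight

theorem lss_vertex_ideal_prime_general (K : Type) [Field K] {V : Type} [Fintype V]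
    (G : SimpleGraph V) [DecidableRel G.Adj] {d : ℕ} (hforest : G.IsAcyclic)
    (hd : G.maxDegree < d) (h : V) :
    Nonempty
        (((MvPolynomial (V × Fin d) K ⧸ lssIdeal K G d) ⧸ vertexIdeal K G d h) ≃+*
          (MvPolynomial ({v : V | v ≠ h} × Fin d) K ⧸
            lssIdeal K (G.induce {v : V | v ≠ h}) d)) ∧
      ∃ hp : (vertexIdeal K G d h).IsPrime,
        Order.height
            (⟨vertexIdeal K G d h, hp⟩ :
              PrimeSpectrum (MvPolynomial (V × Fin d) K ⧸ lssIdeal K G d)) =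
          ((d - G.degree h : ℕ) : ℕ∞) := by
  have hcard (v : V) : (G.neighborSet v).ncard = G.degree v := by
    rw [Set.ncard_eq_toFinset_card', ← G.card_neighborFinset_eq_degree, SimpleGraph.neighborFinset]
  have hdeg (v : V) : (G.neighborSet v).ncard < d :=
    (hcard v).trans_lt ((G.degree_le_maxDegree v).trans_lt hd)
  have hprime := isPrime_vertexIdeal (K := K) hforest hdeg h
  refine ⟨⟨quotientVertexIdealEquiv h⟩, hprime, ?_⟩
  rw [← PrimeSpectrum.height_eq_orderHeight, ← hcard]
  exact (height_vertexIdeal_le (hdeg h).le hprime).antisymm (le_height_vertexIdeal hforest hdeg h)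

/-- Let `G` be a forest, `d = Δ(G) + 1` and `h` a vertex of degree `δ(h)`.  Then
`R_G(d) ⧸ I_h ≅ R_{G∖{h}}(d)`, the ideal `I_h` is prime, and its height is `d - δ(h)`. -/
theorem lss_vertex_ideal_prime (K : Type) [Field K] (n d : ℕ) (G : SimpleGraph (Fin n))
    [DecidableRel G.Adj] (hforest : G.IsAcyclic) (hd : d = G.maxDegree + 1) (h : Fin n) :
    Nonempty
        (((MvPolynomial (Fin n × Fin d) K ⧸ lssIdeal K G d) ⧸ vertexIdeal K G d h) ≃+*
          (MvPolynomial ({v : Fin n | v ≠ h} × Fin d) K ⧸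
            lssIdeal K (G.induce {v : Fin n | v ≠ h}) d)) ∧
      ∃ hp : (vertexIdeal K G d h).IsPrime,
        Order.height
            (⟨vertexIdeal K G d h, hp⟩ :
              PrimeSpectrum (MvPolynomial (Fin n × Fin d) K ⧸ lssIdeal K G d)) =
          ((d - G.degree h : ℕ) : ℕ∞) :=
  lss_vertex_ideal_prime_general K G hforest (by omega) h
end

section
/- Let G be the n-path graph with n ≥ 3 and d = 3. For each i = 2, …, n−1, the images of the ideals P_i and Q_i in R_G(3) have height 1; equivalently, P_i and Q_i have height n in S. -/
open MvPolynomial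

/-- The variable `y_{i c}` of the polynomial ring `K[y_{ij} : i ∈ [n], j ∈ [3]]`,
with indices `i ∈ {1, …, n}` and `c ∈ {1, 2, 3}` as in the paper
(and junk value `0` for out-of-range indices). -/
noncomputable def yvar (K : Type) [Field K] (n i c : ℕ) : MvPolynomial (Fin n × Fin 3) K :=
  if h : 1 ≤ i ∧ i ≤ n ∧ 1 ≤ c ∧ c ≤ 3 then
    MvPolynomial.X (⟨i - 1, by omega⟩, ⟨c - 1, by omega⟩)
  else 0

/-- The LSS generator `f_{a(a+1)} = ∑_{k=1}^3 y_{ak} y_{(a+1)k}` associated to the edge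
`{a, a+1}` of the `n`-path graph. -/
noncomputable def pathGen (K : Type) [Field K] (n a : ℕ) : MvPolynomial (Fin n × Fin 3) K :=
  ∑ k : Fin 3, yvar K n a (k.1 + 1) * yvar K n (a + 1) (k.1 + 1)

/-- The LSS ideal `L_G(3) = (f_{12}, …, f_{(n-1)n})` of the `n`-path graph `G`. -/
noncomputable def pathLSS (K : Type) [Field K] (n : ℕ) :
    Ideal (MvPolynomial (Fin n × Fin 3) K) :=
  Ideal.span {g | ∃ a : ℕ, 1 ≤ a ∧ a + 1 ≤ n ∧ g = pathGen K n a}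

/-- The ideal generated by the list `F_i` of all generators of `pathLSS` except
`f_{(i-1)i}` and `f_{i(i+1)}`. -/
noncomputable def exceptIdeal (K : Type) [Field K] (n i : ℕ) :
    Ideal (MvPolynomial (Fin n × Fin 3) K) :=
  Ideal.span {g | ∃ a : ℕ, 1 ≤ a ∧ a + 1 ≤ n ∧ a ≠ i - 1 ∧ a ≠ i ∧ g = pathGen K n a}

/-- The column index `k`: `2` if `i` is even, `3` if `i` is odd. -/
def kcol (i : ℕ) : ℕ := if Even i then 2 else 3

/-- The column index `k̂ = 5 - k`: `3` if `i` is even, `2` if `i` is odd. -/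
def khat (i : ℕ) : ℕ := if Even i then 3 else 2

/-- The ideal `P_i = (y_{i1}, y_{i2}, y_{i3}) + (F_i)` of `S`. -/
noncomputable def Pideal (K : Type) [Field K] (n i : ℕ) :
    Ideal (MvPolynomial (Fin n × Fin 3) K) :=
  Ideal.span {yvar K n i 1, yvar K n i 2, yvar K n i 3} ⊔ exceptIdeal K n i

/-- The ideal `Q_i = I_1(Y_i y_i) + (det Y_i, y_{i k̂}) + (F_i)` of `S`, where `Y_i` is
the `2 × 2` matrix with rows `(y_{(i-1)1}, y_{(i-1)k})`, `(y_{(i+1)1}, y_{(i+1)k})` and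
`y_i` is the column vector `(y_{i1}, y_{ik})`. -/
noncomputable def Qideal (K : Type) [Field K] (n i : ℕ) :
    Ideal (MvPolynomial (Fin n × Fin 3) K) :=
  Ideal.span
      {yvar K n (i - 1) 1 * yvar K n i 1 + yvar K n (i - 1) (kcol i) * yvar K n i (kcol i),
       yvar K n (i + 1) 1 * yvar K n i 1 + yvar K n (i + 1) (kcol i) * yvar K n i (kcol i),
       yvar K n (i - 1) 1 * yvar K n (i + 1) (kcol i) -
         yvar K n (i - 1) (kcol i) * yvar K n (i + 1) 1,
       yvar K n i (khat i)} ⊔ exceptIdeal K n i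

/-- The height of an ideal: the infimum of the heights of the primes containing it. -/
noncomputable def idealHeight {R : Type*} [CommRing R] (I : Ideal R) : ℕ∞ :=
  ⨅ p : {p : PrimeSpectrum R // I ≤ p.asIdeal}, Order.height p.1

/-!
Colour the edges `{v, v + 1}` of the path properly with the two colours other than `c`. In a
suitable lexicographic order the leading monomial of `f_{v(v+1)}` is its summand
`y_{vk} y_{(v+1)k}`, where `k` is the colour of the edge. Edges sharing a vertex have different
colours, so these monomials and `y_{ic}` are pairwise coprime. Polynomials with pairwise coprime
leading monomials form a regular sequence; hence `L = L_G(3)` has height at least `n - 1` and every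
ideal containing `L` and a variable has height at least `n`. Both `P_i` and `Q_i` contain `L` and
`y_{i k̂}`.

Conversely `P_i` has `n` generators. A prime containing `L` and `y_{i k̂}` but not `y_{i1}` contains
`Q_i`, because `y_{i1} det Y_i` is a combination of the entries of `Y_i y_i`. Such a prime can be
chosen minimal over the `n` generators of `L + (y_{i k̂})`, since these vanish at the point whose
only nonzero coordinate is `y_{i1}`. Both upper bounds are then Krull's height theorem.

Finally `L` is generated by `n - 1` elements and has height `n - 1`, so passing to `R_G(3) = S ⧸ L`
lowers the height of an ideal containing `L` by exactly `n - 1`.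
-/

open scoped MonomialOrder

theorem encard_triple_le {α : Type*} (a b c : α) : ({a, b, c} : Set α).encard ≤ 3 :=
  calc ({a, b, c} : Set α).encard ≤ ({c} : Set α).encard + 1 + 1 :=
        (Set.encard_insert_le _ _).trans (add_le_add_left (Set.encard_insert_le _ _) 1)
    _ = 3 := by rw [Set.encard_singleton]; norm_num

theorem height_add_le_height_of_strictMono {α β : Type*} [Preorder α] [Preorder β] {f : α → β}
    (hf : StrictMono f) {c : ℕ∞} (hc : ∀ y, c ≤ Order.height (f y)) (x : α) :
    Order.height x + c ≤ Order.height (f x) := by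
  have of_natCast_le : ∀ (k : ℕ) (x : α), k ≤ Order.height x → k + c ≤ Order.height (f x) := by
    intro k
    induction k with
    | zero => exact fun x _ => by simpa using hc x
    | succ k ih =>
      intro x hkx
      obtain ⟨y, hyx, hky⟩ : ∃ y < x, (k : ℕ∞) ≤ Order.height y := by
        have hlt : (k : ℕ∞) < Order.height x := lt_of_lt_of_le (by norm_cast; omega) hkx
        simpa [Order.height_le_coe_iff] using hlt.not_ge
      calc ((k + 1 : ℕ) : ℕ∞) + c = k + c + 1 := by push_cast; ring
        _ ≤ Order.height (f y) + 1 := by gcongr; exact ih y hky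
        _ ≤ Order.height (f x) := Order.height_add_one_le (hf hyx)
  obtain hx | hx := eq_or_ne (Order.height x) ⊤
  · suffices Order.height (f x) = ⊤ by simp [this]
    refine ENat.eq_top_iff_forall_ge.2 fun k => ?_
    exact le_self_add.trans (of_natCast_le k x (by simp [hx]))
  · obtain ⟨k, hk⟩ := ENat.ne_top_iff_exists.1 hx
    rw [← hk]
    exact of_natCast_le k x hk.le

section IdealHeight

variable {R : Type*} [CommRing R] {I L : Ideal R}

theorem le_height_of_forall_isPrime {k : ℕ∞}
    (h : ∀ p : Ideal R, p.IsPrime → I ≤ p → k ≤ p.height) : k ≤ I.height := by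
  rw [Ideal.height_eq_inf_minimalPrimes]
  exact le_iInf₂ fun p hp => h p hp.1.1 hp.1.2

theorem idealHeight_eq_height (I : Ideal R) : idealHeight I = I.height := by
  apply le_antisymm
  · refine le_height_of_forall_isPrime fun p hp hIp => ?_
    rw [PrimeSpectrum.height_eq_orderHeight ⟨p, hp⟩]
    exact iInf_le (fun q : {q : PrimeSpectrum R // I ≤ q.asIdeal} => Order.height q.1)
      ⟨⟨p, hp⟩, hIp⟩
  · refine le_iInf fun q => ?_
    rw [← PrimeSpectrum.height_eq_orderHeight]
    exact Ideal.height_mono q.2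

theorem height_add_one_le_height_sup_span_singleton {f : R} (hf : ∀ g, g * f ∈ I → g ∈ I) :
    I.height + 1 ≤ (I ⊔ Ideal.span {f}).height := by
  refine le_height_of_forall_isPrime fun p hp hIp => ?_
  rw [sup_le_iff, Ideal.span_singleton_le_iff_mem] at hIp
  obtain ⟨q, hq, hqp⟩ := Ideal.exists_minimalPrimes_le hIp.1
  have : q.IsPrime := hq.1.1
  have hfq : f ∉ q := fun hfq => by
    obtain ⟨g, hgI, hfg⟩ := Ideal.exists_mul_mem_of_mem_minimalPrimes hq hfq
    exact hgI (hf g (mul_comm f g ▸ hfg))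
  calc I.height + 1 ≤ q.height + 1 := by gcongr; exact hq.1.2
    _ ≤ p.height :=
      Ideal.height_add_one_le_of_lt_of_isPrime (SetLike.lt_iff_le_and_exists.2 ⟨hqp, f, hIp.2, hfq⟩)

theorem height_span_le_encard [IsNoetherianRing R] {s : Set R} (hs : Ideal.span s ≠ ⊤) :
    (Ideal.span s).height ≤ s.encard := by
  obtain hfin | hinf := s.finite_or_infinite
  · obtain ⟨p, hp⟩ := Ideal.nonempty_minimalPrimes hs
    calc (Ideal.span s).height ≤ p.height := Ideal.height_mono hp.1.2
      _ ≤ s.ncard := Ideal.height_le_card_of_mem_minimalPrimes_span hfin hp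
      _ = s.encard := hfin.cast_ncard_eq
  · simp [hinf.encard_eq]

theorem height_map_quotientMk_add_height_le (hLI : L ≤ I) :
    (I.map (Ideal.Quotient.mk L)).height + L.height ≤ I.height := by
  refine le_height_of_forall_isPrime fun p hp hIp => ?_
  have hLp : L ≤ p := hLI.trans hIp
  have hp' : (p.map (Ideal.Quotient.mk L)).IsPrime := Ideal.isPrime_map_quotientMk_of_isPrime hLp
  have hmono : StrictMono (PrimeSpectrum.comap (Ideal.Quotient.mk L)) :=
    Monotone.strictMono_of_injective (fun _ _ h => Ideal.comap_mono h)
      (PrimeSpectrum.comap_injective_of_surjective _ Ideal.Quotient.mk_surjective)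
  have hle := height_add_le_height_of_strictMono hmono (c := L.height) (fun q => by
    rw [← PrimeSpectrum.height_eq_orderHeight]
    exact Ideal.height_mono (Ideal.le_comap_map.trans (Ideal.comap_mono (by simp))))
    ⟨p.map (Ideal.Quotient.mk L), hp'⟩
  rw [← PrimeSpectrum.height_eq_orderHeight, ← PrimeSpectrum.height_eq_orderHeight] at hle
  simp only [PrimeSpectrum.comap_asIdeal, Ideal.comap_map_mk hLp] at hle
  exact (add_le_add_left (Ideal.height_mono (Ideal.map_mono hIp)) _).trans hle

theorem height_le_height_map_quotientMk_add_encard [IsNoetherianRing R] {s : Set R}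
    (hsI : s ⊆ I) :
    I.height ≤ (I.map (Ideal.Quotient.mk (Ideal.span s))).height + s.encard := by
  rw [← tsub_le_iff_right]
  refine le_height_of_forall_isPrime fun q hq hIq => ?_
  have hIp : I ≤ q.comap (Ideal.Quotient.mk (Ideal.span s)) := Ideal.map_le_iff_le_comap.1 hIq
  have hle := Ideal.height_le_height_add_encard_of_subset s (hsI.trans hIp)
  rw [Ideal.map_comap_of_surjective _ Ideal.Quotient.mk_surjective] at hle
  exact tsub_le_iff_right.2 ((Ideal.height_mono hIp).trans hle)

theorem height_map_quotientMk_add [IsNoetherianRing R] {s : Set R} {k : ℕ∞}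
    (hs : s.encard ≤ k) (hk : k ≤ (Ideal.span s).height) (hsI : s ⊆ I) :
    (I.map (Ideal.Quotient.mk (Ideal.span s))).height + k = I.height := by
  apply le_antisymm
  · exact (add_le_add_right hk _).trans
      (height_map_quotientMk_add_height_le (Ideal.span_le.2 hsI))
  · exact (height_le_height_map_quotientMk_add_encard hsI).trans (add_le_add_right hs _)

end IdealHeight

theorem le_of_le_add_of_disjoint {σ : Type*} {a b c : σ →₀ ℕ} (h : a ≤ b + c)
    (hac : Disjoint a c) : a ≤ b := by
  intro x
  have hx : a x ≤ b x + c x := h x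
  have hacx : a x ⊓ c x = 0 := DFunLike.congr_fun hac.eq_bot x
  omega

theorem disjoint_single_add_single_of_eq_zero {σ : Type*} {a b : σ} {d : σ →₀ ℕ} (ha : d a = 0)
    (hb : d b = 0) : Disjoint (Finsupp.single a 1 + Finsupp.single b 1) d := by
  classical
  rw [disjoint_iff]
  ext s
  simp only [Finsupp.inf_apply, Finsupp.add_apply, Finsupp.single_apply, bot_eq_zero,
    Finsupp.coe_zero, Pi.zero_apply]
  grind

section Groebner

variable {σ R : Type*} [CommRing R] {m : MonomialOrder σ}

/-- A Gröbner basis of the ideal spanned by `B`, over a ring: leading coefficients are required to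
be units so that division by `B` is possible. -/
structure IsGroebnerBasis (m : MonomialOrder σ) (B : Set (MvPolynomial σ R)) : Prop where
  isUnit_leadingCoeff : ∀ b ∈ B, IsUnit (m.leadingCoeff b)
  exists_degree_le : ∀ h ∈ Ideal.span B, h ≠ 0 → ∃ b ∈ B, m.degree b ≤ m.degree h

namespace IsGroebnerBasis

theorem empty : IsGroebnerBasis m (∅ : Set (MvPolynomial σ R)) where
  isUnit_leadingCoeff := by simp
  exists_degree_le := by simp

variable {B : Set (MvPolynomial σ R)} {f : MvPolynomial σ R}

theorem exists_sub_mem_span (hB : IsGroebnerBasis m B) (g : MvPolynomial σ R) :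
    ∃ r, g - r ∈ Ideal.span B ∧ ∀ d ∈ r.support, ∀ b ∈ B, ¬ m.degree b ≤ d := by
  obtain ⟨q, r, hg, -, hr⟩ := MonomialOrder.div_set hB.isUnit_leadingCoeff g
  refine ⟨r, ?_, hr⟩
  rw [hg, add_sub_cancel_right]
  exact (Finsupp.mem_span_iff_linearCombination _ _ _).2 ⟨q, rfl⟩

theorem not_degree_le_degree_mul (hf : IsUnit (m.leadingCoeff f))
    (hBf : ∀ b ∈ B, Disjoint (m.degree b) (m.degree f)) {r : MvPolynomial σ R}
    (hr0 : r ≠ 0) (hr : ∀ d ∈ r.support, ∀ b ∈ B, ¬ m.degree b ≤ d) :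
    ∀ b ∈ B, ¬ m.degree b ≤ m.degree (r * f) := by
  intro b hb hle
  rw [m.degree_mul_of_right_mem_nonZeroDivisors hr0 hf.mem_nonZeroDivisors] at hle
  exact hr _ (m.degree_mem_support hr0) b hb (le_of_le_add_of_disjoint hle (hBf b hb))

theorem mem_of_mul_mem (hB : IsGroebnerBasis m B) (hf : IsUnit (m.leadingCoeff f))
    (hBf : ∀ b ∈ B, Disjoint (m.degree b) (m.degree f)) {g : MvPolynomial σ R}
    (hgf : g * f ∈ Ideal.span B) : g ∈ Ideal.span B := by
  obtain ⟨r, hgr, hr⟩ := hB.exists_sub_mem_span g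
  obtain rfl | hr0 := eq_or_ne r 0
  · simpa using hgr
  have hrf : r * f ∈ Ideal.span B := by
    rw [← sub_sub_cancel (g * f) (r * f), ← sub_mul]
    exact sub_mem hgf (Ideal.mul_mem_right f _ hgr)
  have hrf0 : r * f ≠ 0 := fun h0 => hr0 <|
    (mul_right_mem_nonZeroDivisors_eq_zero_iff <|
      m.mem_nonZeroDivisors_of_leadingCoeff_mem_nonZeroDivisors hf.mem_nonZeroDivisors).1 h0
  obtain ⟨b, hb, hle⟩ := hB.exists_degree_le _ hrf hrf0
  exact absurd hle (not_degree_le_degree_mul hf hBf hr0 hr b hb)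

theorem insert_of_disjoint_degree (hB : IsGroebnerBasis m B) (hf : IsUnit (m.leadingCoeff f))
    (hBf : ∀ b ∈ B, Disjoint (m.degree b) (m.degree f)) :
    IsGroebnerBasis m (insert f B) where
  isUnit_leadingCoeff := by simpa using ⟨hf, hB.isUnit_leadingCoeff⟩
  exists_degree_le h hh h0 := by
    obtain ⟨g, h', hh', rfl⟩ := Ideal.mem_span_insert.1 hh
    obtain ⟨r, hgr, hr⟩ := hB.exists_sub_mem_span g
    have hu : (g - r) * f + h' ∈ Ideal.span B := add_mem (Ideal.mul_mem_right f _ hgr) hh'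
    rw [show g * f + h' = r * f + ((g - r) * f + h') by ring] at h0 ⊢
    generalize (g - r) * f + h' = u at hu h0 ⊢
    -- Leading monomials from `B` divide that of `u` but not that of `r * f`: no cancellation.
    have exists_le_degree_u (hu0 : u ≠ 0) : ∃ b ∈ B, m.degree b ≤ m.degree u :=
      hB.exists_degree_le u hu hu0
    obtain rfl | hr0 := eq_or_ne r 0
    · rw [zero_mul, zero_add] at h0 ⊢
      obtain ⟨b, hb, hle⟩ := exists_le_degree_u h0
      exact ⟨b, .inr hb, hle⟩
    have degree_f_le : m.degree f ≤ m.degree (r * f) := by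
      rw [m.degree_mul_of_right_mem_nonZeroDivisors hr0 hf.mem_nonZeroDivisors]
      exact le_add_self
    obtain rfl | hu0 := eq_or_ne u 0
    · exact ⟨f, .inl rfl, by rwa [add_zero]⟩
    obtain ⟨b, hb, hle⟩ := exists_le_degree_u hu0
    have degree_ne : m.degree (r * f) ≠ m.degree u := fun heq =>
      not_degree_le_degree_mul hf hBf hr0 hr b hb (heq ▸ hle)
    obtain hlt | hlt := (m.toSyn.injective.ne degree_ne).lt_or_gt
    · exact ⟨b, .inr hb, by rwa [m.degree_add_eq_right_of_lt hlt]⟩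
    · exact ⟨f, .inl rfl, by rwa [m.degree_add_of_lt hlt]⟩

theorem height_span_add_one_le (hB : IsGroebnerBasis m B) (hf : IsUnit (m.leadingCoeff f))
    (hBf : ∀ b ∈ B, Disjoint (m.degree b) (m.degree f)) :
    (Ideal.span B).height + 1 ≤ (Ideal.span (insert f B)).height := by
  rw [Ideal.span_insert, sup_comm]
  exact height_add_one_le_height_sup_span_singleton fun _ => hB.mem_of_mul_mem hf hBf

end IsGroebnerBasis

section PairwiseDisjoint

variable {ι : Type*} {f : ι → MvPolynomial σ R}

theorem isGroebnerBasis_image {s : Finset ι} (hf : ∀ a ∈ s, IsUnit (m.leadingCoeff (f a)))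
    (hdisj : (s : Set ι).PairwiseDisjoint fun a => m.degree (f a)) :
    IsGroebnerBasis m (f '' s) := by
  classical
  induction s using Finset.induction_on with
  | empty => simpa using IsGroebnerBasis.empty
  | insert a s ha ih =>
    rw [Finset.forall_mem_insert] at hf
    rw [Finset.coe_insert, Set.pairwiseDisjoint_insert_of_notMem ha] at hdisj
    rw [Finset.coe_insert, Set.image_insert_eq]
    exact (ih hf.2 hdisj.1).insert_of_disjoint_degree hf.1
      (Set.forall_mem_image.2 fun b hb => (hdisj.2 b hb).symm)

theorem card_le_height_span_image {s : Finset ι} (hf : ∀ a ∈ s, IsUnit (m.leadingCoeff (f a)))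
    (hdisj : (s : Set ι).PairwiseDisjoint fun a => m.degree (f a)) :
    s.card ≤ (Ideal.span (f '' s)).height := by
  classical
  induction s using Finset.induction_on with
  | empty => simp
  | insert a s ha ih =>
    rw [Finset.forall_mem_insert] at hf
    rw [Finset.coe_insert, Set.pairwiseDisjoint_insert_of_notMem ha] at hdisj
    rw [Finset.coe_insert, Set.image_insert_eq, Finset.card_insert_of_notMem ha, Nat.cast_succ]
    exact (add_le_add_left (ih hf.2 hdisj.1) 1).trans
      ((isGroebnerBasis_image hf.2 hdisj.1).height_span_add_one_le hf.1
        (Set.forall_mem_image.2 fun b hb => (hdisj.2 b hb).symm))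

end PairwiseDisjoint

end Groebner

theorem lex_degree_lt_of_forall_vars {σ R : Type*} [LinearOrder σ] [WellFoundedGT σ]
    [CommSemiring R] {f g : MvPolynomial σ R} {x : σ} (hf : MonomialOrder.lex.degree f x ≠ 0)
    (hg : ∀ z ∈ g.vars, x < z) :
    MonomialOrder.lex.degree g ≺[MonomialOrder.lex] MonomialOrder.lex.degree f := by
  have hx : ∀ z ≤ x, MonomialOrder.lex.degree g z = 0 := fun z hz => by
    obtain rfl | hg0 := eq_or_ne g 0
    · simp
    · exact mem_support_notMem_vars_zero (MonomialOrder.lex.degree_mem_support hg0)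
        fun hzg => (hg z hzg).not_ge hz
  have hlt : MonomialOrder.lex.degree g ≺[MonomialOrder.lex] Finsupp.single x 1 := by
    rw [MonomialOrder.lex_lt_iff, Finsupp.Lex.lt_iff]
    exact ⟨x, fun z hz => by simp [hx z hz.le, hz.ne'], by simp [hx x le_rfl]⟩
  exact hlt.trans_le (MonomialOrder.lex.toSyn_monotone
    (Finsupp.single_le_iff.2 (Nat.one_le_iff_ne_zero.2 hf)))

theorem degree_X_mul_X {σ R : Type*} [CommSemiring R] [Nontrivial R] (m : MonomialOrder σ)
    (a b : σ) :
    m.degree (X a * X b : MvPolynomial σ R) = Finsupp.single a 1 + Finsupp.single b 1 := by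
  classical
  rw [X, X, monomial_mul, m.degree_monomial, one_mul, if_neg one_ne_zero]

/-- The lexicographic monomial order whose variables decrease along an injective `key`. Using a key
instead of a `LinearOrder σ` leaves the order already carried by `σ`, such as that of a product,
out of play. -/
noncomputable def lexAlong {σ τ : Type*} [Finite σ] [LinearOrder τ] (key : σ → τ)
    (hkey : Function.Injective key) : MonomialOrder σ :=
  letI := LinearOrder.lift' key hkey
  MonomialOrder.lex

section LexAlong

variable {σ τ R κ : Type*} [Finite σ] [LinearOrder τ] [CommSemiring R] [Nontrivial R] [Fintype κ]
  {key : σ → τ} {hkey : Function.Injective key} {x y : κ → σ} {c₀ : κ}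

theorem degree_lexAlong_sum_erase_lt [DecidableEq κ] (hx : ∀ c ≠ c₀, key (x c₀) < key (x c))
    (hy : ∀ c ≠ c₀, key (x c₀) < key (y c)) :
    (lexAlong key hkey).degree (∑ c ∈ Finset.univ.erase c₀, X (x c) * X (y c) : MvPolynomial σ R)
      ≺[lexAlong key hkey]
        (lexAlong key hkey).degree (X (x c₀) * X (y c₀) : MvPolynomial σ R) := by
  let := LinearOrder.lift' key hkey
  refine lex_degree_lt_of_forall_vars (x := x c₀) (by simp [degree_X_mul_X]) fun z hz => ?_
  obtain ⟨c, hc, hzc⟩ := Finset.mem_biUnion.1 (vars_sum_subset _ _ hz)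
  have hc₀ := Finset.ne_of_mem_erase hc
  obtain h | h := Finset.mem_union.1 (vars_mul _ _ hzc)
  · rw [vars_X, Finset.mem_singleton] at h
    exact h ▸ hx c hc₀
  · rw [vars_X, Finset.mem_singleton] at h
    exact h ▸ hy c hc₀

theorem degree_lexAlong_sum_X_mul_X (hx : ∀ c ≠ c₀, key (x c₀) < key (x c))
    (hy : ∀ c ≠ c₀, key (x c₀) < key (y c)) :
    (lexAlong key hkey).degree (∑ c, X (x c) * X (y c) : MvPolynomial σ R) =
      Finsupp.single (x c₀) 1 + Finsupp.single (y c₀) 1 := by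
  classical
  rw [← Finset.add_sum_erase _ _ (Finset.mem_univ c₀),
    MonomialOrder.degree_add_of_lt (degree_lexAlong_sum_erase_lt hx hy), degree_X_mul_X]

theorem monic_lexAlong_sum_X_mul_X (hx : ∀ c ≠ c₀, key (x c₀) < key (x c))
    (hy : ∀ c ≠ c₀, key (x c₀) < key (y c)) :
    (lexAlong key hkey).Monic (∑ c, X (x c) * X (y c) : MvPolynomial σ R) := by
  classical
  rw [← Finset.add_sum_erase _ _ (Finset.mem_univ c₀)]
  exact (MonomialOrder.monic_X.mul MonomialOrder.monic_X).add_of_lt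
    (degree_lexAlong_sum_erase_lt hx hy)

end LexAlong

theorem colouredKey_injective {V : Type*} {d : ℕ} [NeZero d] (col : V → Fin d) :
    Function.Injective fun s : V × Fin d => toLex (s.1, s.2 - col s.1) := by
  rintro ⟨u, a⟩ ⟨v, b⟩ h
  obtain ⟨rfl, hab⟩ := Prod.ext_iff.1 (toLex.injective h)
  exact Prod.ext rfl (sub_left_injective hab)

/-- The lexicographic order in which the variables of a smaller vertex are larger and, among the
variables of a vertex `v`, the one of colour `col v` is the largest. -/
noncomputable def colouredLex {V : Type*} [LinearOrder V] [Finite V] {d : ℕ} [NeZero d]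
    (col : V → Fin d) : MonomialOrder (V × Fin d) :=
  lexAlong _ (colouredKey_injective col)

section ColouredLex

variable {V R : Type*} [LinearOrder V] {d : ℕ} [NeZero d]
  (col : V → Fin d) {u v : V}

theorem colouredKey_lt_of_ne {c : Fin d} (hc : c ≠ col u) :
    toLex (u, col u - col u) < toLex (u, c - col u) := by
  rw [sub_self]
  exact Prod.Lex.toLex_lt_toLex.2 (.inr ⟨rfl, Fin.pos_iff_ne_zero.2 (sub_ne_zero.2 hc)⟩)

variable [Finite V] [CommSemiring R] [Nontrivial R]

theorem degree_colouredLex_sum_X_mul_X (huv : u < v) :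
    (colouredLex col).degree (∑ c, X (u, c) * X (v, c) : MvPolynomial (V × Fin d) R) =
      Finsupp.single (u, col u) 1 + Finsupp.single (v, col u) 1 :=
  degree_lexAlong_sum_X_mul_X (x := (u, ·)) (y := (v, ·))
    (fun _ hc => colouredKey_lt_of_ne col hc) fun _ _ => Prod.Lex.toLex_lt_toLex.2 (.inl huv)

theorem monic_colouredLex_sum_X_mul_X (huv : u < v) :
    (colouredLex col).Monic (∑ c, X (u, c) * X (v, c) : MvPolynomial (V × Fin d) R) :=
  monic_lexAlong_sum_X_mul_X (x := (u, ·)) (y := (v, ·)) (c₀ := col u)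
    (fun _ hc => colouredKey_lt_of_ne col hc) fun _ _ => Prod.Lex.toLex_lt_toLex.2 (.inl huv)

end ColouredLex

/-- A proper colouring of the edges of a path by colours other than `c`; the edge `{v, v + 1}` is
indexed by its smaller end `v`. -/
def edgeColour (c : Fin 3) (v : ℕ) : Fin 3 := if Even v then c + 1 else c + 2

theorem edgeColour_ne (c : Fin 3) (v : ℕ) : edgeColour c v ≠ c := by
  unfold edgeColour
  split_ifs <;> simp

theorem edgeColour_succ_ne (c : Fin 3) (v : ℕ) : edgeColour c (v + 1) ≠ edgeColour c v := by
  unfold edgeColour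
  split_ifs <;> grind

section Path

variable {K : Type} [Field K] {n : ℕ}

theorem yvar_succ {v : ℕ} (hv : v < n) (c : Fin 3) :
    yvar K n (v + 1) (c + 1) = X (⟨v, hv⟩, c) := by
  rw [yvar, dif_pos ⟨by omega, by omega, by omega, by omega⟩]
  rfl

theorem pathGen_succ {v : ℕ} (hv : v + 1 < n) :
    pathGen K n (v + 1) = ∑ c, X (⟨v, by omega⟩, c) * X (⟨v + 1, hv⟩, c) := by
  simp only [pathGen, yvar_succ (Nat.lt_of_succ_lt hv), yvar_succ hv]

theorem pathLSS_eq_span_image :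
    pathLSS K n = Ideal.span (pathGen K n '' (Finset.Ico 1 n : Finset ℕ)) := by
  rw [pathLSS]
  congr 1
  ext g
  simp only [Set.mem_ofPred_eq, Finset.coe_Ico, Set.mem_image, Set.mem_Ico]
  grind

/-- The lexicographic order for which the leading monomial of `pathGen K n (v + 1)` is the summand
of colour `edgeColour c v`. -/
noncomputable def pathOrder (n : ℕ) (c : Fin 3) : MonomialOrder (Fin n × Fin 3) :=
  colouredLex fun v => edgeColour c v

theorem degree_pathGen (c : Fin 3) {v : ℕ} (hv : v + 1 < n) :
    (pathOrder n c).degree (pathGen K n (v + 1)) =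
      Finsupp.single (⟨v, by omega⟩, edgeColour c v) 1 +
        Finsupp.single (⟨v + 1, hv⟩, edgeColour c v) 1 := by
  rw [pathGen_succ hv]
  exact degree_colouredLex_sum_X_mul_X _ (Fin.mk_lt_mk.2 v.lt_succ_self)

theorem monic_pathGen (c : Fin 3) {a : ℕ} (ha : a ∈ Finset.Ico 1 n) :
    (pathOrder n c).Monic (pathGen K n a) := by
  obtain ⟨v, rfl⟩ := Nat.exists_eq_add_of_le' (Finset.mem_Ico.1 ha).1
  rw [pathGen_succ (Finset.mem_Ico.1 ha).2]
  exact monic_colouredLex_sum_X_mul_X _ (Fin.mk_lt_mk.2 v.lt_succ_self)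

theorem isUnit_leadingCoeff_pathGen (c : Fin 3) {a : ℕ} (ha : a ∈ Finset.Ico 1 n) :
    IsUnit ((pathOrder n c).leadingCoeff (pathGen K n a)) := by
  rw [(monic_pathGen c ha).leadingCoeff_eq_one]
  exact isUnit_one

theorem pairwiseDisjoint_degree_pathGen (c : Fin 3) :
    (Finset.Ico 1 n : Set ℕ).PairwiseDisjoint
      fun a => (pathOrder n c).degree (pathGen K n a) := by
  intro a ha b hb hab
  simp only [Finset.coe_Ico, Set.mem_Ico] at ha hb
  obtain ⟨v, rfl⟩ := Nat.exists_eq_add_of_le' ha.1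
  obtain ⟨w, rfl⟩ := Nat.exists_eq_add_of_le' hb.1
  have hvw := edgeColour_succ_ne c v
  have hwv := edgeColour_succ_ne c w
  rw [Function.onFun, degree_pathGen c ha.2, degree_pathGen c hb.2]
  apply disjoint_single_add_single_of_eq_zero <;>
    simp only [Finsupp.add_apply, Finsupp.single_apply, Prod.mk_inj, Fin.mk_eq_mk] <;> grind

theorem disjoint_degree_pathGen_X {c : Fin 3} {a : ℕ} (ha : a ∈ Finset.Ico 1 n) (v : Fin n) :
    Disjoint ((pathOrder n c).degree (pathGen K n a))
      ((pathOrder n c).degree (X (v, c) : MvPolynomial (Fin n × Fin 3) K)) := by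
  obtain ⟨w, rfl⟩ := Nat.exists_eq_add_of_le' (Finset.mem_Ico.1 ha).1
  rw [degree_pathGen c (Finset.mem_Ico.1 ha).2, MonomialOrder.degree_X]
  apply disjoint_single_add_single_of_eq_zero <;>
    simp [(edgeColour_ne c w).symm]

theorem sub_one_le_height_pathLSS : ((n - 1 : ℕ) : ℕ∞) ≤ (pathLSS K n).height := by
  rw [pathLSS_eq_span_image, ← Nat.card_Ico]
  exact card_le_height_span_image (fun _ => isUnit_leadingCoeff_pathGen 0)
    (pairwiseDisjoint_degree_pathGen 0)

theorem le_height_of_X_mem {I : Ideal (MvPolynomial (Fin n × Fin 3) K)}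
    (hLI : pathLSS K n ≤ I) {v : Fin n} {c : Fin 3} (hvc : X (v, c) ∈ I) : n ≤ I.height := by
  have hgb : IsGroebnerBasis (pathOrder n c) (pathGen K n '' (Finset.Ico 1 n : Finset ℕ)) :=
    isGroebnerBasis_image (fun _ => isUnit_leadingCoeff_pathGen c)
      (pairwiseDisjoint_degree_pathGen c)
  calc (n : ℕ∞) = (n - 1 : ℕ) + 1 := by norm_cast; have := v.pos; omega
    _ ≤ (pathLSS K n).height + 1 := by gcongr; exact sub_one_le_height_pathLSS
    _ ≤ (Ideal.span (insert (X (v, c)) (pathGen K n '' (Finset.Ico 1 n : Finset ℕ)))).height := by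
      rw [pathLSS_eq_span_image]
      exact hgb.height_span_add_one_le (by simp)
        (Set.forall_mem_image.2 fun a ha => disjoint_degree_pathGen_X ha v)
    _ ≤ I.height := by
      rw [Ideal.span_insert, ← pathLSS_eq_span_image]
      exact Ideal.height_mono (sup_le (I.span_singleton_le_iff_mem.2 hvc) hLI)

theorem encard_image_pathGen_le :
    (pathGen K n '' (Finset.Ico 1 n : Finset ℕ)).encard ≤ (n - 1 : ℕ) := by
  rw [← Nat.card_Ico, ← Set.encard_coe_eq_coe_finsetCard]
  exact Set.encard_image_le _ _

variable {i : ℕ} {I : Ideal (MvPolynomial (Fin n × Fin 3) K)}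

theorem height_map_quotientMk_pathLSS_add (hLI : pathLSS K n ≤ I) :
    (I.map (Ideal.Quotient.mk (pathLSS K n))).height + (n - 1 : ℕ) = I.height := by
  have hk := sub_one_le_height_pathLSS (K := K) (n := n)
  rw [pathLSS_eq_span_image] at hLI hk ⊢
  exact height_map_quotientMk_add encard_image_pathGen_le hk (Ideal.span_le.1 hLI)

theorem height_map_quotientMk_pathLSS_eq_one (hn : 0 < n) (hLI : pathLSS K n ≤ I)
    (hI : I.height = n) : (I.map (Ideal.Quotient.mk (pathLSS K n))).height = 1 := by
  have hadd := height_map_quotientMk_pathLSS_add hLI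
  rw [hI, show (n : ℕ∞) = 1 + (n - 1 : ℕ) by norm_cast; omega] at hadd
  exact ENat.add_left_injective_of_ne_top (ENat.natCast_ne_top _) hadd

theorem exists_yvar_khat_eq_X (hi : 1 ≤ i) (hin : i ≤ n) :
    ∃ v c, yvar K n i (khat i) = X (v, c) := by
  obtain ⟨v, rfl⟩ := Nat.exists_eq_add_of_le' hi
  unfold khat
  split_ifs
  · exact ⟨_, _, yvar_succ hin 2⟩
  · exact ⟨_, _, yvar_succ hin 1⟩

theorem le_height_of_yvar_khat_mem (hi : 1 ≤ i) (hin : i ≤ n) (hLI : pathLSS K n ≤ I)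
    (hiI : yvar K n i (khat i) ∈ I) : n ≤ I.height := by
  obtain ⟨v, c, hvc⟩ := exists_yvar_khat_eq_X (K := K) hi hin
  exact le_height_of_X_mem hLI (hvc ▸ hiI)

theorem pathGen_eq_add (a i : ℕ) :
    pathGen K n a = yvar K n a 1 * yvar K n (a + 1) 1 +
      yvar K n a (kcol i) * yvar K n (a + 1) (kcol i) +
      yvar K n a (khat i) * yvar K n (a + 1) (khat i) := by
  rw [pathGen, Fin.sum_univ_three]
  unfold kcol khat
  split_ifs
  · rfl
  · exact add_right_comm _ _ _

theorem pathGen_mem_iff {a : ℕ}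
    (h : yvar K n a (khat i) ∈ I ∨ yvar K n (a + 1) (khat i) ∈ I) :
    pathGen K n a ∈ I ↔ yvar K n a 1 * yvar K n (a + 1) 1 +
      yvar K n a (kcol i) * yvar K n (a + 1) (kcol i) ∈ I := by
  rw [pathGen_eq_add a i]
  exact I.add_mem_iff_left (h.elim (I.mul_mem_right _) (I.mul_mem_left _))

theorem pathLSS_le_iff : pathLSS K n ≤ I ↔ ∀ a, 1 ≤ a → a + 1 ≤ n → pathGen K n a ∈ I := by
  rw [pathLSS, Ideal.span_le]
  constructor
  · exact fun h a ha han => h ⟨a, ha, han, rfl⟩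
  · rintro h _ ⟨a, ha, han, rfl⟩
    exact h a ha han

theorem exceptIdeal_le_pathLSS : exceptIdeal K n i ≤ pathLSS K n :=
  Ideal.span_mono fun _ ⟨a, ha, han, _, _, hg⟩ => ⟨a, ha, han, hg⟩

theorem pathLSS_le_of_exceptIdeal_le (hI : exceptIdeal K n i ≤ I)
    (hpred : pathGen K n (i - 1) ∈ I) (hself : pathGen K n i ∈ I) : pathLSS K n ≤ I := by
  refine pathLSS_le_iff.2 fun a ha han => ?_
  obtain rfl | ha_pred := eq_or_ne a (i - 1)
  · exact hpred
  obtain rfl | ha_self := eq_or_ne a i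
  · exact hself
  exact hI (Ideal.subset_span ⟨a, ha, han, ha_pred, ha_self, rfl⟩)

theorem yvar_mem_Pideal {c : ℕ} (hc : 1 ≤ c) (hc' : c ≤ 3) : yvar K n i c ∈ Pideal K n i := by
  refine Ideal.mem_sup_left (Ideal.subset_span ?_)
  interval_cases c <;> simp

theorem pathLSS_le_Pideal (hi : 1 ≤ i) : pathLSS K n ≤ Pideal K n i := by
  refine pathLSS_le_of_exceptIdeal_le le_sup_right ?_ ?_
  · rw [pathGen, Nat.sub_add_cancel hi]
    exact sum_mem fun k _ => Ideal.mul_mem_left _ _ (yvar_mem_Pideal (by omega) (by omega))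
  · exact sum_mem fun k _ => Ideal.mul_mem_right _ _ (yvar_mem_Pideal (by omega) (by omega))

theorem yvar_khat_mem_Pideal : yvar K n i (khat i) ∈ Pideal K n i := by
  unfold khat
  split_ifs <;> exact yvar_mem_Pideal (by simp) (by simp)

theorem yvar_khat_mem_Qideal : yvar K n i (khat i) ∈ Qideal K n i :=
  Ideal.mem_sup_left (Ideal.subset_span (by simp))

theorem pathLSS_le_Qideal (hi : 1 ≤ i) : pathLSS K n ≤ Qideal K n i := by
  have hkhat := yvar_khat_mem_Qideal (K := K) (n := n) (i := i)
  refine pathLSS_le_of_exceptIdeal_le le_sup_right ?_ ?_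
  · rw [pathGen_mem_iff (.inr (by rwa [Nat.sub_add_cancel hi])), Nat.sub_add_cancel hi]
    exact Ideal.mem_sup_left (Ideal.subset_span (by simp))
  · rw [pathGen_mem_iff (.inl hkhat), mul_comm, mul_comm (yvar K n i (kcol i))]
    exact Ideal.mem_sup_left (Ideal.subset_span (by simp))

/-- Evaluation at the point whose only nonzero coordinate is `y_{i1} = 1`; this is the origin when
`i = 0`. -/
noncomputable def axisEval (K : Type) [Field K] (n i : ℕ) :
    MvPolynomial (Fin n × Fin 3) K →+* K :=
  eval fun s => if s.1.1 + 1 = i ∧ s.2 = 0 then 1 else 0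

theorem axisEval_yvar_self (hi : 1 ≤ i) (hin : i ≤ n) : axisEval K n i (yvar K n i 1) = 1 := by
  obtain ⟨v, rfl⟩ := Nat.exists_eq_add_of_le' hi
  rw [show yvar K n (v + 1) 1 = X (⟨v, hin⟩, 0) from yvar_succ hin 0, axisEval, eval_X]
  simp

theorem axisEval_yvar_of_ne {a c : ℕ} (h : a ≠ i ∨ c ≠ 1) :
    axisEval K n i (yvar K n a c) = 0 := by
  unfold yvar
  split_ifs
  · rw [axisEval, eval_X, if_neg]
    rw [Fin.ext_iff]
    grind
  · exact map_zero _

theorem pathLSS_le_ker_axisEval : pathLSS K n ≤ RingHom.ker (axisEval K n i) := by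
  refine pathLSS_le_iff.2 fun a _ _ => ?_
  rw [RingHom.mem_ker, pathGen, map_sum]
  refine Finset.sum_eq_zero fun k _ => ?_
  rw [map_mul]
  obtain rfl | ha := eq_or_ne a i
  · rw [axisEval_yvar_of_ne (.inl a.succ_ne_self), mul_zero]
  · rw [axisEval_yvar_of_ne (.inl ha), zero_mul]

theorem Pideal_ne_top (hi : 1 ≤ i) : Pideal K n i ≠ ⊤ := by
  have hle : Pideal K n i ≤ RingHom.ker (axisEval K n 0) := by
    refine sup_le (Ideal.span_le.2 ?_) (exceptIdeal_le_pathLSS.trans pathLSS_le_ker_axisEval)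
    rintro _ (rfl | rfl | rfl) <;> exact axisEval_yvar_of_ne (.inl (by omega))
  exact ne_top_of_le_ne_top (RingHom.ker_ne_top _) hle

theorem Pideal_eq_span : Pideal K n i =
    Ideal.span ({yvar K n i 1, yvar K n i 2, yvar K n i 3} ∪
      pathGen K n '' (Finset.Ico 1 n \ {i - 1, i} : Finset ℕ)) := by
  rw [Ideal.span_union, Pideal, exceptIdeal]
  congr 2
  ext g
  simp only [Set.mem_ofPred_eq, Set.mem_image, Finset.mem_coe, Finset.mem_sdiff, Finset.mem_Ico,
    Finset.mem_insert, Finset.mem_singleton]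
  grind

theorem height_Pideal_le (hi : 2 ≤ i) (hin : i + 1 ≤ n) : (Pideal K n i).height ≤ n := by
  have hcard : (Finset.Ico 1 n \ {i - 1, i} : Finset ℕ).card = n - 3 := by
    rw [Finset.card_sdiff_of_subset (by grind), Finset.card_pair (by omega), Nat.card_Ico]
    omega
  have hne : Pideal K n i ≠ ⊤ := Pideal_ne_top (by omega)
  rw [Pideal_eq_span] at hne ⊢
  refine (height_span_le_encard hne).trans ((Set.encard_union_le _ _).trans ?_)
  calc _ ≤ (3 : ℕ∞) + (n - 3 : ℕ) := by
        refine add_le_add (encard_triple_le _ _ _) ?_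
        rw [← hcard, ← Set.encard_coe_eq_coe_finsetCard]
        exact Set.encard_image_le _ _
    _ = n := by norm_cast; omega

theorem height_Pideal (hi : 2 ≤ i) (hin : i + 1 ≤ n) : (Pideal K n i).height = n := by
  have hi1 : 1 ≤ i := by omega
  exact (height_Pideal_le hi hin).antisymm <|
    le_height_of_yvar_khat_mem hi1 (by omega) (pathLSS_le_Pideal hi1) yvar_khat_mem_Pideal

theorem Qideal_le_of_isPrime (hi : 2 ≤ i) (hin : i + 1 ≤ n)
    {p : Ideal (MvPolynomial (Fin n × Fin 3) K)} (hp : p.IsPrime) (hLp : pathLSS K n ≤ p)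
    (hkhat : yvar K n i (khat i) ∈ p) (h1 : yvar K n i 1 ∉ p) :
    Qideal K n i ≤ p := by
  have hi1 : i - 1 + 1 = i := by omega
  have hprev := pathLSS_le_iff.1 hLp (i - 1) (by omega) (by omega)
  rw [pathGen_mem_iff (.inr (by rwa [hi1])), hi1] at hprev
  have hnext := pathLSS_le_iff.1 hLp i (by omega) hin
  rw [pathGen_mem_iff (.inl hkhat), mul_comm, mul_comm (yvar K n i (kcol i))] at hnext
  have hdet : yvar K n (i - 1) 1 * yvar K n (i + 1) (kcol i) -
      yvar K n (i - 1) (kcol i) * yvar K n (i + 1) 1 ∈ p := by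
    refine (hp.mem_or_mem (y := yvar K n i 1) ?_).resolve_right h1
    convert sub_mem (p.mul_mem_left (yvar K n (i + 1) (kcol i)) hprev)
      (p.mul_mem_left (yvar K n (i - 1) (kcol i)) hnext) using 1
    ring
  refine sup_le (Ideal.span_le.2 ?_) (exceptIdeal_le_pathLSS.trans hLp)
  rintro _ (rfl | rfl | rfl | rfl)
  exacts [hprev, hnext, hdet, hkhat]

theorem height_Qideal_le (hi : 2 ≤ i) (hin : i + 1 ≤ n) : (Qideal K n i).height ≤ n := by
  set s : Set (MvPolynomial (Fin n × Fin 3) K) :=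
    insert (yvar K n i (khat i)) (pathGen K n '' (Finset.Ico 1 n : Finset ℕ)) with hs
  have hspan : Ideal.span s = Ideal.span {yvar K n i (khat i)} ⊔ pathLSS K n := by
    rw [hs, Ideal.span_insert, pathLSS_eq_span_image]
  have hker : Ideal.span s ≤ RingHom.ker (axisEval K n i) := by
    rw [hspan, sup_le_iff, Ideal.span_singleton_le_iff_mem, RingHom.mem_ker]
    refine ⟨axisEval_yvar_of_ne (.inr ?_), pathLSS_le_ker_axisEval⟩
    unfold khat
    split_ifs <;> simp
  have hprime : (RingHom.ker (axisEval K n i)).IsPrime := RingHom.ker_isPrime _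
  obtain ⟨p, hp, hpker⟩ := Ideal.exists_minimalPrimes_le hker
  have h1 : yvar K n i 1 ∉ p := fun h1 => one_ne_zero <|
    (axisEval_yvar_self (by omega) (by omega)).symm.trans (hpker h1)
  have hsp := hp.1.2
  rw [hspan, sup_le_iff, Ideal.span_singleton_le_iff_mem] at hsp
  have hfin : s.Finite := ((Finset.finite_toSet _).image _).insert _
  calc (Qideal K n i).height ≤ p.height :=
        Ideal.height_mono (Qideal_le_of_isPrime hi hin hp.1.1 hsp.2 hsp.1 h1)
    _ ≤ s.ncard := Ideal.height_le_card_of_mem_minimalPrimes_span hfin hp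
    _ = s.encard := hfin.cast_ncard_eq
    _ ≤ (n - 1 : ℕ) + 1 :=
        (Set.encard_insert_le _ _).trans (add_le_add_left encard_image_pathGen_le 1)
    _ = n := by norm_cast; omega

theorem height_Qideal (hi : 2 ≤ i) (hin : i + 1 ≤ n) : (Qideal K n i).height = n := by
  have hi1 : 1 ≤ i := by omega
  exact (height_Qideal_le hi hin).antisymm <|
    le_height_of_yvar_khat_mem hi1 (by omega) (pathLSS_le_Qideal hi1) yvar_khat_mem_Qideal

end Path

/-- For the `n`-path graph with `n ≥ 3` and `d = 3`, the ideals `P_i` and `Q_i`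
(`i = 2, …, n-1`) have height `n` in `S`; equivalently, their images in
`R_G(3) = S ⧸ L_G(3)` have height `1`. -/
theorem path_P_Q_height (K : Type) [Field K] (n : ℕ) (hn : 3 ≤ n) :
    ∀ i : ℕ, 2 ≤ i → i + 1 ≤ n →
      idealHeight (Pideal K n i) = (n : ℕ∞) ∧
      idealHeight (Qideal K n i) = (n : ℕ∞) ∧
      idealHeight (Ideal.map (Ideal.Quotient.mk (pathLSS K n)) (Pideal K n i)) = 1 ∧
      idealHeight (Ideal.map (Ideal.Quotient.mk (pathLSS K n)) (Qideal K n i)) = 1 := by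
  intro i hi hin
  have hi1 : 1 ≤ i := by omega
  have hP : (Pideal K n i).height = n := height_Pideal hi hin
  have hQ : (Qideal K n i).height = n := height_Qideal hi hin
  simp only [idealHeight_eq_height]
  exact ⟨hP, hQ,
    height_map_quotientMk_pathLSS_eq_one (by omega) (pathLSS_le_Pideal hi1) hP,
    height_map_quotientMk_pathLSS_eq_one (by omega) (pathLSS_le_Qideal hi1) hQ⟩
end
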